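/- In the setting below, assume additionally that the closure of Per_H equals M and that δ ∈ (0, ν) is such that X_δ has finitely many maximal chains that are pairwise disjoint, each accumulating at x. Then for every p ∈ Per_H^{n−1} ∩ B_δ(x) there exists an open set V containing S_p such that Per_H ∩ V ∩ B_δ(x) ⊆ [p], where [p] denotes the maximal chain of X_δ containing p. -/

import Mathlib

open Metric Set

variable {M : Type*} [MetricSpace M]

/-- Iterates of a homeomorphism, indexed by `ℤ`. -/
def iterZ (f : M ≃ₜ M) (k : ℤ) (x : M) : M := (f.toEquiv ^ k) x

/-- `f` is expansive with expansivity constant `α`. -/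
def IsExpansive (f : M ≃ₜ M) (α : ℝ) : Prop :=
  ∀ x y : M, x ≠ y → ∃ k : ℤ, α < dist (iterZ f k x) (iterZ f k y)

/-- Stable set of `x`. -/
def Ws (f : M ≃ₜ M) (x : M) : Set M :=
  {y | Filter.Tendsto (fun k : ℤ => dist (iterZ f k x) (iterZ f k y)) Filter.atTop (nhds 0)}

/-- Unstable set of `x`. -/
def Wu (f : M ≃ₜ M) (x : M) : Set M :=
  {y | Filter.Tendsto (fun k : ℤ => dist (iterZ f k x) (iterZ f k y)) Filter.atBot (nhds 0)}

/-- Local (`ε`-local) stable set of `x`. -/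
def WsLoc (f : M ≃ₜ M) (ε : ℝ) (x : M) : Set M :=
  {y | ∀ k : ℤ, 0 ≤ k → dist (iterZ f k x) (iterZ f k y) ≤ ε}

/-- Local (`ε`-local) unstable set of `x`. -/
def WuLoc (f : M ≃ₜ M) (ε : ℝ) (x : M) : Set M :=
  {y | ∀ k : ℤ, k ≤ 0 → dist (iterZ f k x) (iterZ f k y) ≤ ε}

/-- The model space `ℝ^r × ℝ^{n-r}`. -/
abbrev ModelSp (n r : ℕ) := (Fin r → ℝ) × (Fin (n - r) → ℝ)

/-- The model hyperbolic linear map `L(a,b) = (a/2, 2b)`. -/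
noncomputable def modelL (n r : ℕ) : ModelSp n r → ModelSp n r :=
  fun q => (fun i => q.1 i / 2, fun i => 2 * q.2 i)

/-- Topologically hyperbolic periodic points of index `r` (`Per_H^r`). -/
def PerHr (f : M ≃ₜ M) (n r : ℕ) : Set M :=
  {p | ∃ l : ℕ, 1 ≤ l ∧ (f.toEquiv ^ l) p = p ∧
    ∃ (U : Set M) (V : Set (ModelSp n r)) (h : U ≃ₜ V),
      IsOpen U ∧ IsOpen V ∧ (0 : ModelSp n r) ∈ V ∧
      ∃ hp : p ∈ U, ((h ⟨p, hp⟩ : V) : ModelSp n r) = 0 ∧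
        ∀ z : M, ∀ hz : z ∈ U, ∀ hz' : (f.toEquiv ^ l) z ∈ U,
          ((h ⟨(f.toEquiv ^ l) z, hz'⟩ : V) : ModelSp n r) = modelL n r (h ⟨z, hz⟩)}

/-- All topologically hyperbolic periodic points (`Per_H`). -/
def PerH (f : M ≃ₜ M) (n : ℕ) : Set M := ⋃ r ∈ Finset.range (n + 1), PerHr f n r

/-- `p` admits a local product structure. -/
def AdmitsLPS (f : M ≃ₜ M) (n : ℕ) (p : M) : Prop :=
  ∃ (k : ℕ) (h : (Fin k → ℝ) × (Fin (n - k) → ℝ) → M) (ε : ℝ),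
    0 < ε ∧ Topology.IsEmbedding h ∧ p ∈ Set.range h ∧
    ∀ x : Fin k → ℝ, ∀ y : Fin (n - k) → ℝ,
      h '' ({x} ×ˢ univ) = WsLoc f ε (h (x, y)) ∩ Set.range h ∧
      h '' (univ ×ˢ {y}) = WuLoc f ε (h (x, y)) ∩ Set.range h

/-- `D` has exactly two connected components, namely `V₁` and `V₂`. -/
def TwoComponents {M : Type*} [TopologicalSpace M] (D V₁ V₂ : Set M) : Prop :=
  V₁ ≠ V₂ ∧
  (∀ y ∈ D, connectedComponentIn D y = V₁ ∨ connectedComponentIn D y = V₂) ∧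
  (∃ y ∈ D, connectedComponentIn D y = V₁) ∧ (∃ y ∈ D, connectedComponentIn D y = V₂)

variable {M : Type*} [MetricSpace M]

/-- `S_p = cc_p(W^s(p) ∩ B_ν(x))`. -/
def SpSet (f : M ≃ₜ M) (x : M) (ν : ℝ) (p : M) : Set M :=
  connectedComponentIn (Ws f p ∩ Metric.ball x ν) p

/-- `U_p = cc_p(W^u(p) ∩ B_ν(x))`. -/
def UpSet (f : M ≃ₜ M) (x : M) (ν : ℝ) (p : M) : Set M :=
  connectedComponentIn (Wu f p ∩ Metric.ball x ν) p

/-- `Ŝ_p = B_ν(x) \ cc_x(B_ν(x) \ S_p)`. -/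
def ShatSet (f : M ≃ₜ M) (x : M) (ν : ℝ) (p : M) : Set M :=
  Metric.ball x ν \ connectedComponentIn (Metric.ball x ν \ SpSet f x ν p) x

/-- `X_δ = Per_H^{n-1} ∩ B_δ(x)`. -/
def Xdelta (f : M ≃ₜ M) (n : ℕ) (x : M) (δ : ℝ) : Set M :=
  PerHr f n (n - 1) ∩ Metric.ball x δ

/-- `C` is a chain of `(X_δ, ≤)`, where `p ≤ q ↔ Ŝ_p ⊆ Ŝ_q`. -/
def IsChainIn (f : M ≃ₜ M) (n : ℕ) (x : M) (ν δ : ℝ) (C : Set M) : Prop :=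
  C ⊆ Xdelta f n x δ ∧
  ∀ p ∈ C, ∀ q ∈ C, ShatSet f x ν p ⊆ ShatSet f x ν q ∨ ShatSet f x ν q ⊆ ShatSet f x ν p

/-- `C` is a maximal chain of `(X_δ, ≤)`. -/
def IsMaxChainIn (f : M ≃ₜ M) (n : ℕ) (x : M) (ν δ : ℝ) (C : Set M) : Prop :=
  IsChainIn f n x ν δ C ∧ ∀ C' : Set M, IsChainIn f n x ν δ C' → C ⊆ C' → C' = C

/-!
The index of a hyperbolic periodic point is locally constant on `Per_H`. Let `q` be a hyperbolic
periodic point near `p`, and look at a small box in the chart of `p`. Inside it the local stable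
disc of `q` runs along the stable direction and reaches the boundary there only, and likewise for
the local unstable disc; by expansivity the two discs meet at `q` only, where they cross like
coordinate planes. If `dim E^s(q) < dim E^s(p)`, the first disc could be perturbed away from the
axis of the second one, whereas the crossing has degree one modulo two. Hence
`dim E^s(p) ≤ dim E^s(q)`, and the same for the inverse of `f` gives equality. Iterates of `f` carry
this from a neighbourhood of `p` to a neighbourhood of `W^s(p)`.

The maximal chain `[p]` accumulates at `x`, so it contains some `c ≠ p` with `Ŝ_p ⊆ Ŝ_c`. Near `S_p`
every point of `X_δ` lies in `Ŝ_c`, so it is below `c` and hence, as maximal chains are disjoint, a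
member of `[p]`.
-/

section Kuhn

variable {m n N : ℕ} {R : Type*}

/-- The vertex number `j` of the Kuhn simplex with base point `z` and direction order `σ` in the
Freudenthal–Kuhn triangulation of the discrete torus `(ℤ/N)ⁿ`: the unit steps in the directions
`σ 0, …, σ (j - 1)` have been taken. -/
def kuhnVertex (z : Fin n → ZMod N) (σ : Equiv.Perm (Fin n)) (j : ℕ) : Fin n → ZMod N :=
  fun x => z x + if (σ.symm x : ℕ) < j then 1 else 0

lemma kuhnVertex_mul_swap (z : Fin n → ZMod N) (σ : Equiv.Perm (Fin n)) {a b : Fin n}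
    (hab : (a : ℕ) + 1 = b) {j : ℕ} (hj : j ≠ b) :
    kuhnVertex z (σ * Equiv.swap a b) j = kuhnVertex z σ j := by
  funext x
  have hsymm : (σ * Equiv.swap a b).symm x = Equiv.swap a b (σ.symm x) := rfl
  have hlt : ((Equiv.swap a b (σ.symm x) : Fin n) : ℕ) < j ↔ ((σ.symm x : Fin n) : ℕ) < j := by
    rcases eq_or_ne (σ.symm x) a with ha | ha
    · rw [ha, Equiv.swap_apply_left]; omega
    · rcases eq_or_ne (σ.symm x) b with hb | hb
      · rw [hb, Equiv.swap_apply_right]; omega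
      · rw [Equiv.swap_apply_of_ne_of_ne ha hb]
  simp only [kuhnVertex, hsymm, hlt]

lemma kuhnVertex_mul_finRotate (z : Fin (m + 1) → ZMod N) (σ : Equiv.Perm (Fin (m + 1))) {j : ℕ}
    (hj : j ≤ m) :
    kuhnVertex (kuhnVertex z σ 1) (σ * finRotate (m + 1)) j = kuhnVertex z σ (j + 1) := by
  funext x
  have hsymm : (σ * finRotate (m + 1)).symm x = (finRotate (m + 1)).symm (σ.symm x) := rfl
  obtain ⟨y, hy⟩ := (finRotate (m + 1)).surjective (σ.symm x)
  simp only [kuhnVertex, hsymm, ← hy, Equiv.symm_apply_apply, add_assoc]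
  congr 1
  rcases eq_or_ne y (Fin.last m) with rfl | hlast
  · simp [hj.not_gt]
  · have hval := coe_finRotate_of_ne_last hlast
    rw [hval]
    simp

/-- Every facet opposite to an interior vertex is shared by exactly two simplices with the same
base point, so in characteristic two such contributions cancel. -/
lemma sum_kuhnVertex_eq_zero [NeZero N] [CommRing R] [CharP R 2]
    {g : (ℕ → Fin n → ZMod N) → R} {a b : Fin n} (hab : (a : ℕ) + 1 = b)
    (hg : DependsOn g {(b : ℕ)}ᶜ) :
    ∑ s : (Fin n → ZMod N) × Equiv.Perm (Fin n), g (kuhnVertex s.1 s.2) = 0 := by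
  have hne : a ≠ b := fun h => by omega
  refine Finset.sum_involution (fun s _ => (s.1, s.2 * Equiv.swap a b)) (fun s _ => ?_)
    (fun s _ _ hs => hne ?_) (fun _ _ => Finset.mem_univ _) fun s _ => by simp [mul_assoc]
  · rw [hg fun j hj => kuhnVertex_mul_swap s.1 s.2 hab hj]
    exact CharTwo.add_self_eq_zero _
  · exact Equiv.swap_eq_one_iff.1 (mul_eq_left.1 (congrArg Prod.snd hs))

/-- The facet opposite to the first vertex of `(z, σ)` is the facet opposite to the last vertex of
exactly one simplex: step to the next base point and rotate `σ`. -/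
lemma sum_kuhnVertex_shift [NeZero N] [AddCommMonoid R]
    {g : (ℕ → Fin (m + 1) → ZMod N) → R} (hg : DependsOn g (Iic m)) :
    ∑ s : (Fin (m + 1) → ZMod N) × Equiv.Perm (Fin (m + 1)),
        g (fun j => kuhnVertex s.1 s.2 (j + 1)) =
      ∑ s : (Fin (m + 1) → ZMod N) × Equiv.Perm (Fin (m + 1)), g (kuhnVertex s.1 s.2) := by
  refine Fintype.sum_bijective (fun s => (kuhnVertex s.1 s.2 1, s.2 * finRotate (m + 1)))
    ((Finite.injective_iff_bijective).1 ?_) _ _ fun s =>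
      hg fun j hj => (kuhnVertex_mul_finRotate s.1 s.2 hj).symm
  rintro ⟨z, σ⟩ ⟨z', σ'⟩ h
  simp only [Prod.mk.injEq, mul_left_inj] at h
  obtain ⟨hz, rfl⟩ := h
  refine Prod.ext (funext fun x => ?_) rfl
  simpa [kuhnVertex] using congrFun hz x

/-- The product of the differences of `t₀, …, tₘ₋₁` along the edges of the path `v₀, …, vₘ₊₁` other
than the edge from `vₖ` to `vₖ₊₁`; the signs are immaterial in characteristic two. -/
def edgeProdSkip [CommRing R] {V : Type*} (t : Fin m → V → R) (k : ℕ) (v : ℕ → V) : R :=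
  ∏ i : Fin m, if (i : ℕ) < k then t i (v (i + 1)) + t i (v i)
    else t i (v (i + 2)) + t i (v (i + 1))

lemma edgeProdSkip_zero [CommRing R] {V : Type*} (t : Fin m → V → R) (v : ℕ → V) :
    edgeProdSkip t 0 v = edgeProdSkip t m fun j => v (j + 1) := by
  simp [edgeProdSkip]

lemma dependsOn_edgeProdSkip [CommRing R] {V : Type*} (t : Fin m → V → R) :
    DependsOn (edgeProdSkip t m) (Iic m) := by
  refine fun v w hvw => Finset.prod_congr rfl fun i _ => ?_
  rw [if_pos i.is_lt, if_pos i.is_lt, hvw _ (mem_Iic.2 i.is_lt), hvw _ (mem_Iic.2 i.is_lt.le)]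

lemma dependsOn_edgeProdSkip_add_succ [CommRing R] [CharP R 2] {V : Type*} (t : Fin m → V → R)
    {k : ℕ} (hk : k < m) :
    DependsOn (fun v => edgeProdSkip t k v + edgeProdSkip t (k + 1) v) {k + 1}ᶜ := by
  -- The two products differ in the factor of `tₖ` only, and the sum of these two factors is
  -- `tₖ(vₖ₊₂) + tₖ(vₖ)`.
  have hsum (v : ℕ → V) : edgeProdSkip t k v + edgeProdSkip t (k + 1) v =
      (t ⟨k, hk⟩ (v (k + 2)) + t ⟨k, hk⟩ (v k)) *
        ∏ i ∈ Finset.univ.erase (⟨k, hk⟩ : Fin m), if (i : ℕ) < k then t i (v (i + 1)) + t i (v i)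
          else t i (v (i + 2)) + t i (v (i + 1)) := by
    have hrest : ∏ i ∈ Finset.univ.erase (⟨k, hk⟩ : Fin m),
          (if (i : ℕ) < k + 1 then t i (v (i + 1)) + t i (v i)
            else t i (v (i + 2)) + t i (v (i + 1))) =
        ∏ i ∈ Finset.univ.erase (⟨k, hk⟩ : Fin m),
          if (i : ℕ) < k then t i (v (i + 1)) + t i (v i)
            else t i (v (i + 2)) + t i (v (i + 1)) := by
      refine Finset.prod_congr rfl fun i hi => if_congr ?_ rfl rfl
      have hik : (i : ℕ) ≠ k := fun h => Finset.ne_of_mem_erase hi (Fin.ext h)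
      omega
    simp only [edgeProdSkip]
    rw [← Finset.mul_prod_erase _ _ (Finset.mem_univ (⟨k, hk⟩ : Fin m)),
      ← Finset.mul_prod_erase _ _ (Finset.mem_univ (⟨k, hk⟩ : Fin m)), hrest, ← add_mul]
    simp only [lt_irrefl, if_false, Nat.lt_succ_self, if_true]
    rw [add_assoc, CharTwo.add_cancel_left]
  intro v w hvw
  have heq {j : ℕ} (hj : j ≠ k + 1) : v j = w j := hvw j hj
  simp only [hsum]
  rw [heq (by omega : k + 2 ≠ k + 1), heq (by omega : k ≠ k + 1)]
  congr 1
  refine Finset.prod_congr rfl fun i hi => ?_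
  have hik : (i : ℕ) ≠ k := fun h => Finset.ne_of_mem_erase hi (Fin.ext h)
  split_ifs with hlt
  · rw [heq (by omega : (i : ℕ) + 1 ≠ k + 1), heq (by omega : (i : ℕ) ≠ k + 1)]
  · rw [heq (by omega : (i : ℕ) + 1 ≠ k + 1), heq (by omega : (i : ℕ) + 2 ≠ k + 1)]

lemma sum_mul_edgeProdSkip_eq [NeZero N] [CommRing R] [CharP R 2]
    (t : Fin m → (Fin (m + 1) → ZMod N) → R) (T : (Fin (m + 1) → ZMod N) → R) {k : ℕ}
    (hk : k ≤ m) :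
    ∑ s : (Fin (m + 1) → ZMod N) × Equiv.Perm (Fin (m + 1)),
        T (kuhnVertex s.1 s.2 (m + 1)) * edgeProdSkip t k (kuhnVertex s.1 s.2) =
      ∑ s : (Fin (m + 1) → ZMod N) × Equiv.Perm (Fin (m + 1)),
        T (kuhnVertex s.1 s.2 (m + 1)) * edgeProdSkip t 0 (kuhnVertex s.1 s.2) := by
  induction k with
  | zero => rfl
  | succ k ih =>
    rw [← ih (by omega), ← CharTwo.add_eq_zero, ← Finset.sum_add_distrib]
    refine sum_kuhnVertex_eq_zero (a := ⟨k, by omega⟩) (b := ⟨k + 1, by omega⟩) rfl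
      (g := fun v => T (v (m + 1)) * edgeProdSkip t (k + 1) v +
        T (v (m + 1)) * edgeProdSkip t k v) fun v w hvw => ?_
    have hlast : v (m + 1) = w (m + 1) := hvw _ fun h => by simp at h; omega
    simp only [← mul_add, hlast, add_comm (edgeProdSkip t (k + 1) _)]
    exact congrArg _ (dependsOn_edgeProdSkip_add_succ t hk hvw)

/-- A discrete version of the fact that the exact form `dt₀ ∧ ⋯ ∧ dtₘ` integrates to zero over the
torus. -/
theorem sum_prod_kuhnVertex_eq_zero [NeZero N] [CommRing R] [CharP R 2]
    (t : Fin (m + 1) → (Fin (m + 1) → ZMod N) → R) :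
    ∑ s : (Fin (m + 1) → ZMod N) × Equiv.Perm (Fin (m + 1)),
      ∏ i, (t i (kuhnVertex s.1 s.2 (i + 1)) + t i (kuhnVertex s.1 s.2 i)) = 0 := by
  let t' (i : Fin m) := t i.castSucc
  let T := t (Fin.last m)
  have hshift : ∑ s : (Fin (m + 1) → ZMod N) × Equiv.Perm (Fin (m + 1)),
        T (kuhnVertex s.1 s.2 (m + 1)) * edgeProdSkip t' 0 (kuhnVertex s.1 s.2) =
      ∑ s : (Fin (m + 1) → ZMod N) × Equiv.Perm (Fin (m + 1)),
        T (kuhnVertex s.1 s.2 m) * edgeProdSkip t' m (kuhnVertex s.1 s.2) := by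
    simp only [edgeProdSkip_zero]
    refine sum_kuhnVertex_shift (g := fun v => T (v m) * edgeProdSkip t' m v) fun v w hvw => ?_
    simp only [dependsOn_edgeProdSkip t' hvw, hvw m self_mem_Iic]
  calc _ = ∑ s : (Fin (m + 1) → ZMod N) × Equiv.Perm (Fin (m + 1)),
        (T (kuhnVertex s.1 s.2 (m + 1)) * edgeProdSkip t' m (kuhnVertex s.1 s.2) +
          T (kuhnVertex s.1 s.2 m) * edgeProdSkip t' m (kuhnVertex s.1 s.2)) := by
        refine Finset.sum_congr rfl fun s _ => ?_
        rw [Fin.prod_univ_castSucc, mul_comm, add_mul]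
        simp [T, t', edgeProdSkip]
    _ = 0 := by
        rw [Finset.sum_add_distrib, sum_mul_edgeProdSkip_eq t' T le_rfl, hshift]
        exact CharTwo.add_self_eq_zero _

end Kuhn

section Degree

variable {n N : ℕ}

/-- The point of the grid `hℤⁿ` representing a point `w` of the discrete torus, each coordinate
being lifted to its representative of least absolute value. -/
noncomputable def gridPoint (h : ℝ) (w : Fin n → ZMod N) : Fin n → ℝ :=
  fun x => h * (w x).valMinAbs

/-- The indicator modulo two of the event that the `i`-th coordinate changes sign from `u i` to
`u (i + 1)`, for every `i`. Summed over the images `u` of the Kuhn simplices under a map, it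
computes the degree modulo two of that map at `0`. -/
noncomputable def signChange (u : ℕ → Fin n → ℝ) : ZMod 2 :=
  ∏ i : Fin n, ((if u (i + 1) i < 0 then 1 else 0) + if u i i < 0 then 1 else 0)

lemma norm_lt_of_signChange_ne_zero {u : ℕ → Fin n → ℝ} (hu : signChange u ≠ 0) {c : ℝ} {j : ℕ}
    (hc : ∀ k, dist (u j) (u k) < c) : ‖u j‖ < c := by
  have hcoord (k : ℕ) (i : Fin n) : |u j i - u k i| < c :=
    (dist_le_pi_dist (u j) (u k) i).trans_lt (hc k)
  refine (pi_norm_lt_iff (dist_self (u j) ▸ hc j)).2 fun i => ?_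
  have hi := Finset.prod_ne_zero_iff.1 hu i (Finset.mem_univ _)
  have hfst := abs_lt.1 (hcoord (i + 1) i)
  have hsnd := abs_lt.1 (hcoord i i)
  rw [Real.norm_eq_abs, abs_lt]
  split_ifs at hi
  · exact absurd (CharTwo.add_self_eq_zero 1) hi
  · constructor <;> linarith
  · constructor <;> linarith
  · exact absurd (add_zero 0) hi

lemma exists_pos_signChange_comp_eq_zero {F : (Fin n → ℝ) → Fin n → ℝ} (hF : Continuous F)
    {A : Set (Fin n → ℝ)} (hA : IsCompact A) (hne : ∀ z ∈ A, F z ≠ 0) :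
    ∃ d > 0, ∀ u : ℕ → Fin n → ℝ, (∀ j k, dist (u j) (u k) < d) → (∃ j, u j ∈ A) →
      signChange (F ∘ u) = 0 := by
  obtain ⟨c, hc, hcF⟩ := hA.exists_forall_le' hF.norm.continuousOn fun z hz =>
    norm_pos_iff.2 (hne z hz)
  obtain ⟨d, hd, hdF⟩ := Metric.mem_uniformity_dist.1
    (hA.uniformContinuousAt_of_continuousAt F (fun _ _ => hF.continuousAt)
      (Metric.dist_mem_uniformity hc))
  refine ⟨d, hd, fun u hu ⟨j, hj⟩ => by_contra fun hs => ?_⟩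
  exact (hcF _ hj).not_gt (norm_lt_of_signChange_ne_zero hs fun k => hdF (hu j k) hj)

lemma valMinAbs_add_one [NeZero N] {a : ZMod N} (ha : 2 * (a.valMinAbs + 1) ≤ N) :
    (a + 1).valMinAbs = a.valMinAbs + 1 := by
  refine (ZMod.valMinAbs_spec _ _).2 ⟨by simp, ?_, by omega⟩
  have := (ZMod.valMinAbs_mem_Ioc a).1
  omega

lemma gridPoint_kuhnVertex [NeZero N] (h : ℝ) {z : Fin n → ZMod N}
    (hz : ∀ x, 2 * ((z x).valMinAbs + 1) ≤ N) (σ : Equiv.Perm (Fin n)) (j : ℕ) (x : Fin n) :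
    gridPoint h (kuhnVertex z σ j) x =
      h * ((z x).valMinAbs + if (σ.symm x : ℕ) < j then 1 else 0) := by
  simp only [gridPoint, kuhnVertex]
  split_ifs
  · rw [valMinAbs_add_one (hz x)]
    push_cast
    rfl
  · simp

lemma dist_gridPoint_kuhnVertex_le [NeZero N] {h : ℝ} (hh : 0 ≤ h) {z : Fin n → ZMod N}
    (hz : ∀ x, 2 * ((z x).valMinAbs + 1) ≤ N) (σ : Equiv.Perm (Fin n)) (j k : ℕ) :
    dist (gridPoint h (kuhnVertex z σ j)) (gridPoint h (kuhnVertex z σ k)) ≤ h := by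
  refine (dist_pi_le_iff hh).2 fun x => ?_
  rw [gridPoint_kuhnVertex h hz, gridPoint_kuhnVertex h hz, Real.dist_eq, abs_le]
  split_ifs <;> constructor <;> linarith

lemma two_mul_valMinAbs_add_one_le [NeZero N] {h R : ℝ} (hh : 0 < h) (hN : 2 * (R + h) < h * N)
    {z : Fin n → ZMod N} {σ : Equiv.Perm (Fin n)} {j : ℕ}
    (hR : ‖gridPoint h (kuhnVertex z σ j)‖ ≤ R) (x : Fin n) : 2 * ((z x).valMinAbs + 1) ≤ N := by
  set b := (kuhnVertex z σ j x).valMinAbs with hb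
  have hbR : h * |(b : ℝ)| ≤ R := by
    rw [← abs_of_pos hh, ← abs_mul]
    exact (norm_le_pi_norm _ x).trans hR
  have hbN : 2 * (|b| + 1) < N := by
    have : 2 * (|(b : ℝ)| + 1) < N := by
      refine lt_of_mul_lt_mul_left ?_ hh.le
      linarith
    exact_mod_cast this
  have hlow := neg_abs_le b
  have hup := le_abs_self b
  rcases lt_or_ge (σ.symm x : ℕ) j with hlt | hge
  · have hzx : (z x).valMinAbs = b - 1 :=
      (ZMod.valMinAbs_spec _ _).2 ⟨by simp [hb, kuhnVertex, hlt], by omega, by omega⟩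
    omega
  · have hzx : (z x).valMinAbs = b := by simp [hb, kuhnVertex, hge.not_gt]
    omega

lemma valMinAbs_eq_neg_one_iff (hN : 2 < N) {a : ZMod N} : a.valMinAbs = -1 ↔ a = -1 := by
  have : NeZero N := ⟨by omega⟩
  rw [ZMod.valMinAbs_spec]
  simp only [Int.cast_neg, Int.cast_one, mem_Ioc, and_iff_left_iff_imp]
  omega

/-- The exceptional simplex has the vertices `(-h, …, -h)`, `(0, -h, …, -h)`, …, `(0, …, 0)`. -/
lemma signChange_gridPoint_kuhnVertex {h : ℝ} (hh : 0 < h) (hN : 2 < N) {z : Fin n → ZMod N}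
    (hz : ∀ x, 2 * ((z x).valMinAbs + 1) ≤ N) (σ : Equiv.Perm (Fin n)) :
    signChange (fun j => gridPoint h (kuhnVertex z σ j)) =
      if (z, σ) = (fun _ => -1, 1) then 1 else 0 := by
  have : NeZero N := ⟨by omega⟩
  have hneg (i : Fin n) (j : ℕ) : gridPoint h (kuhnVertex z σ j) i < 0 ↔
      (z i).valMinAbs + (if (σ.symm i : ℕ) < j then 1 else 0) < 0 := by
    rw [gridPoint_kuhnVertex h hz, ← not_le, mul_nonneg_iff_of_pos_left hh, not_le]
    exact_mod_cast Iff.rfl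
  have hfactor (i : Fin n) :
      (if gridPoint h (kuhnVertex z σ (i + 1)) i < 0 then (1 : ZMod 2) else 0) +
          (if gridPoint h (kuhnVertex z σ i) i < 0 then 1 else 0) =
        if σ.symm i = i ∧ (z i).valMinAbs = -1 then 1 else 0 := by
    simp only [hneg, Fin.ext_iff]
    rcases eq_or_ne (σ.symm i : ℕ) i with hi | hi
    · simp only [hi, Nat.lt_succ_self, if_true, lt_irrefl, if_false, true_and]
      split_ifs <;> first | omega | rfl
    · have hlt : (σ.symm i : ℕ) < i + 1 ↔ (σ.symm i : ℕ) < i := by omega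
      simp only [hi, hlt, false_and, if_false, CharTwo.add_self_eq_zero]
  simp only [signChange, hfactor, Finset.prod_ite_zero, Finset.prod_const_one]
  refine if_congr ?_ rfl rfl
  simp only [Finset.mem_univ, true_imp_iff, forall_and, valMinAbs_eq_neg_one_iff hN,
    Prod.mk.injEq, funext_iff, Equiv.symm_apply_eq, Equiv.ext_iff, Equiv.Perm.one_apply,
    eq_comm (a := σ _)]
  exact and_comm

lemma norm_gridPoint_kuhnVertex_neg_one_le {h : ℝ} (hh : 0 < h) (hN : 2 < N) (j : ℕ) :
    ‖gridPoint h (kuhnVertex (fun _ : Fin n => (-1 : ZMod N)) 1 j)‖ ≤ h := by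
  have : NeZero N := ⟨by omega⟩
  have hval : (-1 : ZMod N).valMinAbs = -1 := (valMinAbs_eq_neg_one_iff hN).2 rfl
  refine (pi_norm_le_iff_of_nonneg hh.le).2 fun x => ?_
  rw [gridPoint_kuhnVertex h (fun _ => by rw [hval]; omega), hval, Real.norm_eq_abs, abs_le]
  push_cast
  split_ifs <;> constructor <;> linarith

lemma exists_pos_signChange_comp_gridPoint {F : (Fin n → ℝ) → Fin n → ℝ} (hF : Continuous F)
    (hid : ∀ᶠ z in nhds 0, F z = z) {A : Set (Fin n → ℝ)} (hA : IsCompact A)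
    (hzero : ∀ z ∈ A, F z = 0 → z = 0) :
    ∃ d > 0, ∀ h N, 0 < h → h < d → 2 < N → ∀ (z : Fin n → ZMod N) (σ : Equiv.Perm (Fin n)),
      (∀ x, 2 * ((z x).valMinAbs + 1) ≤ N) → (∃ j, gridPoint h (kuhnVertex z σ j) ∈ A) →
        signChange (fun j => F (gridPoint h (kuhnVertex z σ j))) =
          if (z, σ) = (fun _ => -1, 1) then 1 else 0 := by
  obtain ⟨ρ, hρ, hball⟩ := Metric.eventually_nhds_iff_ball.1 hid
  obtain ⟨d, hd, hFd⟩ := exists_pos_signChange_comp_eq_zero hF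
    (hA.diff (isOpen_ball (x := 0) (ε := ρ / 2))) fun z hz h0 =>
      hz.2 (by rw [hzero z hz.1 h0]; exact mem_ball_self (half_pos hρ))
  refine ⟨min d (ρ / 2), lt_min hd (half_pos hρ), fun h N hh hhd hN z σ hinner ⟨j, hj⟩ => ?_⟩
  obtain ⟨hhd, hhρ⟩ := lt_min_iff.1 hhd
  have : NeZero N := ⟨by omega⟩
  have hdist := dist_gridPoint_kuhnVertex_le hh.le hinner σ
  by_cases hjρ : gridPoint h (kuhnVertex z σ j) ∈ ball 0 (ρ / 2)
  · rw [← signChange_gridPoint_kuhnVertex hh hN hinner]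
    refine congrArg signChange (funext fun k => hball _ ?_)
    rw [mem_ball] at hjρ ⊢
    linarith [dist_triangle (gridPoint h (kuhnVertex z σ k)) (gridPoint h (kuhnVertex z σ j)) 0,
      hdist k j]
  · rw [if_neg]
    · exact hFd (fun k => gridPoint h (kuhnVertex z σ k)) (fun k l => (hdist k l).trans_lt hhd)
        ⟨j, hj, hjρ⟩
    · rintro ⟨rfl, rfl⟩
      exact hjρ (mem_ball_zero_iff.2
        ((norm_gridPoint_kuhnVertex_neg_one_le hh hN j).trans_lt hhρ))

lemma exists_grid_mesh {d : ℝ} (hd : 0 < d) (R : ℝ) :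
    ∃ (h : ℝ) (N : ℕ), 0 < h ∧ h < d ∧ 2 < N ∧ 2 * (R + h) < h * N := by
  obtain ⟨N, hN⟩ := exists_nat_gt (max 2 (2 * (R + d / 2) / (d / 2)))
  have hd' : 0 < d / 2 := half_pos hd
  refine ⟨d / 2, N, hd', half_lt_self hd, ?_, ?_⟩
  · exact_mod_cast (le_max_left _ _).trans_lt hN
  · rw [mul_comm (d / 2), ← div_lt_iff₀ hd']
    exact (le_max_right _ _).trans_lt hN

/-- Homotopy invariance of the degree modulo two in disguise: both maps have the same degree, since
they agree off `Ω`, and that of `F₁` is one. The degree is computed by counting the Kuhn simplices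
of a fine grid along which the signs of the coordinates change. -/
theorem exists_mem_closure_eq_zero_of_eqOn_compl_pi {m : ℕ}
    {F₁ F₂ : (Fin (m + 1) → ℝ) → Fin (m + 1) → ℝ}
    (h₁ : Continuous F₁) (h₂ : Continuous F₂) {Ω : Set (Fin (m + 1) → ℝ)}
    (hb : Bornology.IsBounded Ω) (hΩ : Ω ∈ nhds 0) (hid : ∀ᶠ z in nhds 0, F₁ z = z)
    (hzero : ∀ z ∈ closure Ω, F₁ z = 0 → z = 0) (heq : EqOn F₁ F₂ Ωᶜ) :
    ∃ z ∈ closure Ω, F₂ z = 0 := by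
  by_contra! hne
  obtain ⟨ρ, hρ, hball⟩ := Metric.mem_nhds_iff.1 hΩ
  obtain ⟨d₁, hd₁, hF₁⟩ := exists_pos_signChange_comp_gridPoint h₁ hid hb.isCompact_closure hzero
  obtain ⟨d₂, hd₂, hF₂⟩ := exists_pos_signChange_comp_eq_zero h₂ hb.isCompact_closure hne
  obtain ⟨R, hR⟩ := hb.subset_closedBall 0
  obtain ⟨h, N, hh, hhd, hN, hNR⟩ := exists_grid_mesh (lt_min (lt_min hd₁ hd₂) hρ) R
  obtain ⟨⟨hhd₁, hhd₂⟩, hhρ⟩ := And.imp_left lt_min_iff.1 (lt_min_iff.1 hhd)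
  have : NeZero N := ⟨by omega⟩
  let count (F : (Fin (m + 1) → ℝ) → Fin (m + 1) → ℝ)
      (s : (Fin (m + 1) → ZMod N) × Equiv.Perm (Fin (m + 1))) : ZMod 2 :=
    signChange fun j => F (gridPoint h (kuhnVertex s.1 s.2 j))
  have hkey (s) : count F₁ s + count F₂ s = if s = (fun _ => -1, 1) then 1 else 0 := by
    by_cases hs : ∃ j, gridPoint h (kuhnVertex s.1 s.2 j) ∈ Ω
    · obtain ⟨j, hj⟩ := hs
      have hinner := two_mul_valMinAbs_add_one_le hh hNR (mem_closedBall_zero_iff.1 (hR hj))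
      have h₂zero : count F₂ s = 0 := hF₂ (fun j => gridPoint h (kuhnVertex s.1 s.2 j))
        (fun k l => (dist_gridPoint_kuhnVertex_le hh.le hinner s.2 k l).trans_lt hhd₂)
        ⟨j, subset_closure hj⟩
      rw [h₂zero, add_zero]
      exact hF₁ h N hh hhd₁ hN s.1 s.2 hinner ⟨j, subset_closure hj⟩
    · push Not at hs
      have hcount : count F₁ s = count F₂ s := congrArg signChange (funext fun j => heq (hs j))
      rw [hcount, CharTwo.add_self_eq_zero, if_neg]
      rintro rfl
      exact hs 0 (hball (mem_ball_zero_iff.2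
        ((norm_gridPoint_kuhnVertex_neg_one_le hh hN 0).trans_lt hhρ)))
  have hsum (F) : ∑ s, count F s = 0 :=
    sum_prod_kuhnVertex_eq_zero fun i w => if F (gridPoint h w) i < 0 then (1 : ZMod 2) else 0
  have hone : ∑ s, (count F₁ s + count F₂ s) = 1 := by
    simp only [hkey, Finset.sum_ite_eq', Finset.mem_univ, if_true]
  rw [Finset.sum_add_distrib, hsum, hsum, add_zero] at hone
  exact zero_ne_one hone

theorem exists_mem_closure_eq_zero_of_eqOn_compl {X : Type*} [NormedAddCommGroup X]
    [NormedSpace ℝ X] [FiniteDimensional ℝ X] {F₁ F₂ : X → X} (h₁ : Continuous F₁)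
    (h₂ : Continuous F₂) {Ω : Set X} (hb : Bornology.IsBounded Ω) (hΩ : Ω ∈ nhds 0)
    (hid : ∀ᶠ z in nhds 0, F₁ z = z) (hzero : ∀ z ∈ closure Ω, F₁ z = 0 → z = 0)
    (heq : EqOn F₁ F₂ Ωᶜ) : ∃ z ∈ closure Ω, F₂ z = 0 := by
  rcases hd : Module.finrank ℝ X with _ | m
  · have : Subsingleton X := Module.finrank_zero_iff.1 hd
    exact ⟨0, subset_closure (mem_of_mem_nhds hΩ), Subsingleton.elim _ _⟩
  let e : X ≃L[ℝ] (Fin (m + 1) → ℝ) := ContinuousLinearEquiv.ofFinrankEq (by simp [hd])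
  have hcl : closure (e.symm ⁻¹' Ω) = e.symm ⁻¹' closure Ω :=
    (e.symm.toHomeomorph.preimage_closure Ω).symm
  have htend : Filter.Tendsto e.symm (nhds 0) (nhds 0) := by
    simpa using e.symm.continuous.tendsto 0
  obtain ⟨w, hw, hw0⟩ := exists_mem_closure_eq_zero_of_eqOn_compl_pi
    (F₁ := e ∘ F₁ ∘ e.symm) (F₂ := e ∘ F₂ ∘ e.symm) (Ω := e.symm ⁻¹' Ω) (by fun_prop) (by fun_prop)
    (e.image_eq_preimage_symm Ω ▸ e.lipschitz.isBounded_image hb) (htend hΩ)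
    ((htend.eventually hid).mono fun w hw => by simp [hw])
    (fun w hw h0 => e.symm.map_eq_zero_iff.1 (hzero _ (hcl.subset hw) (by simpa using h0)))
    fun w hw => by simp [heq hw]
  exact ⟨e.symm w, hcl.subset hw, by simpa using hw0⟩

end Degree

lemma exists_continuous_eqOn {X Y : Type*} [TopologicalSpace X] [NormalSpace X]
    [NormedAddCommGroup Y] [NormedSpace ℝ Y] [FiniteDimensional ℝ Y] {A : Set X}
    (hA : IsClosed A) {g : X → Y} (hg : ContinuousOn g A) :
    ∃ F : X → Y, Continuous F ∧ EqOn F g A := by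
  obtain ⟨F, hF⟩ := ContinuousMap.exists_restrict_eq (Y := Y) hA
    ⟨_, continuousOn_iff_continuous_domRestrict.1 hg⟩
  exact ⟨F, F.continuous, fun z hz => DFunLike.congr_fun hF ⟨z, hz⟩⟩

/-- A map `g` is essential on `Ω` (in the sense of Granas) if every continuous map on the closure
of `Ω` with the same boundary values as `g` has a zero; this replaces the nonvanishing of a
topological degree. -/
def IsEssentialOn {X Y : Type*} [TopologicalSpace X] [TopologicalSpace Y] [Zero Y]
    (g : X → Y) (Ω : Set X) : Prop :=
  ∀ g' : X → Y, ContinuousOn g' (closure Ω) → EqOn g' g (frontier Ω) → ∃ z ∈ closure Ω, g' z = 0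

lemma IsEssentialOn.congr {X Y : Type*} [TopologicalSpace X] [TopologicalSpace Y] [Zero Y]
    {g₁ g₂ : X → Y} {Ω : Set X} (hg : IsEssentialOn g₁ Ω) (h : EqOn g₁ g₂ (frontier Ω)) :
    IsEssentialOn g₂ Ω :=
  fun g' hg' hfr => hg g' hg' (hfr.trans h.symm)

/-- If `G` had no zero at time `1`, an Urysohn function `τ`, equal to `0` on the frontier and to `1`
at all points where `G` vanishes at some time, would make `G (τ z, z)` a nonvanishing competitor. -/
theorem IsEssentialOn.exists_eq_zero_of_homotopy {X Y : Type*} [TopologicalSpace X]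
    [T4Space X] [TopologicalSpace Y] [T1Space Y] [Zero Y] {g : X → Y} {Ω : Set X}
    (hg : IsEssentialOn g Ω) (hΩ : IsCompact (closure Ω)) {G : ℝ × X → Y}
    (hG : ContinuousOn G (Icc 0 1 ×ˢ closure Ω)) (hG0 : ∀ z ∈ frontier Ω, G (0, z) = g z)
    (hfr : ∀ z ∈ frontier Ω, ∀ t ∈ Icc (0 : ℝ) 1, G (t, z) ≠ 0) :
    ∃ z ∈ closure Ω, G (1, z) = 0 := by
  let Z : Set X := Prod.snd '' ((Icc (0 : ℝ) 1 ×ˢ closure Ω) ∩ G ⁻¹' {0})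
  have hZ : IsCompact Z :=
    ((isCompact_Icc.prod hΩ).of_isClosed_subset (hG.preimage_isClosed_of_isClosed
      (isClosed_Icc.prod isClosed_closure) isClosed_singleton) inter_subset_left).image
      continuous_snd
  have hdisj : Disjoint (frontier Ω) Z := by
    rw [Set.disjoint_left]
    rintro z hz ⟨⟨t, _⟩, ⟨⟨ht, _⟩, h0⟩, rfl⟩
    exact hfr _ hz t ht h0
  obtain ⟨τ, hτ0, hτ1, hτ⟩ :=
    exists_continuous_zero_one_of_isClosed isClosed_frontier hZ.isClosed hdisj
  obtain ⟨z, hz, hz0⟩ := hg (fun z => G (τ z, z)) (hG.comp (by fun_prop) fun z hz => ⟨hτ z, hz⟩)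
    fun z hz => by simp only [hτ0 hz, Pi.zero_apply, hG0 z hz]
  have hτz : τ z = 1 := hτ1 ⟨(τ z, z), ⟨⟨hτ z, hz⟩, hz0⟩, rfl⟩
  exact ⟨z, hz, hτz ▸ hz0⟩

section Essential

variable {X Y : Type*} [NormedAddCommGroup Y] [NormedSpace ℝ Y]

/-- The radial retraction of a normed space onto its closed ball of radius `c > 0` around `0`. -/
noncomputable def radialRetraction (c : ℝ) (y : Y) : Y := (c / max c ‖y‖) • y

lemma continuous_radialRetraction {c : ℝ} (hc : 0 < c) :
    Continuous (radialRetraction c : Y → Y) :=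
  (continuous_const.div (by fun_prop) fun _ => (lt_max_of_lt_left hc).ne').smul continuous_id

lemma norm_radialRetraction_le {c : ℝ} (hc : 0 < c) (y : Y) : ‖radialRetraction c y‖ ≤ c := by
  have hm : 0 < max c ‖y‖ := lt_max_of_lt_left hc
  rw [radialRetraction, norm_smul, Real.norm_of_nonneg (by positivity), div_mul_eq_mul_div,
    div_le_iff₀ hm]
  exact mul_le_mul_of_nonneg_left (le_max_right _ _) hc.le

lemma radialRetraction_eq_zero_iff {c : ℝ} (hc : 0 < c) {y : Y} :
    radialRetraction c y = 0 ↔ y = 0 := by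
  have hm : 0 < max c ‖y‖ := lt_max_of_lt_left hc
  simp [radialRetraction, hc.ne', hm.ne']

lemma radialRetraction_of_norm_le {c : ℝ} (hc : 0 < c) {y : Y} (hy : ‖y‖ ≤ c) :
    radialRetraction c y = y := by
  rw [radialRetraction, max_eq_left hy, div_self hc.ne', one_smul]

lemma exists_continuous_eventuallyEq_symm [TopologicalSpace X] [Zero X]
    (H : OpenPartialHomeomorph X Y) (h0 : 0 ∈ H.source) (hH : H 0 = 0) :
    ∃ h : Y → X, Continuous h ∧ h =ᶠ[nhds 0] H.symm ∧ ∀ y, h y = 0 → y = 0 := by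
  obtain ⟨c, hc, hct⟩ := Metric.nhds_basis_closedBall.mem_iff.1
    (H.open_target.mem_nhds (hH ▸ H.map_source h0))
  have hmem (y : Y) : radialRetraction c y ∈ H.target :=
    hct (mem_closedBall_zero_iff.2 (norm_radialRetraction_le hc y))
  refine ⟨fun y => H.symm (radialRetraction c y), ?_, ?_, fun y hy => ?_⟩
  · exact H.continuousOn_symm.comp_continuous (continuous_radialRetraction hc) hmem
  · filter_upwards [closedBall_mem_nhds 0 hc] with y hy
    rw [radialRetraction_of_norm_le hc (mem_closedBall_zero_iff.1 hy)]
  · rw [← radialRetraction_eq_zero_iff hc, ← H.right_inv (hmem y), ← hH]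
    exact congrArg H hy

variable [NormedAddCommGroup X] [NormedSpace ℝ X]

theorem isEssentialOn_of_eventuallyEq [FiniteDimensional ℝ X] (H : OpenPartialHomeomorph X Y)
    (h0 : 0 ∈ H.source) (hH : H 0 = 0) {Ω : Set X} (hb : Bornology.IsBounded Ω)
    (hΩ : Ω ∈ nhds 0) {g : X → Y} (hg : ContinuousOn g (closure Ω)) (hloc : g =ᶠ[nhds 0] H)
    (hzero : ∀ z ∈ closure Ω, g z = 0 → z = 0) : IsEssentialOn g Ω := by
  classical
  intro g' hg' hfr
  obtain ⟨h, hh, hsymm, hh0⟩ := exists_continuous_eventuallyEq_symm H h0 hH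
  obtain ⟨F₁, hF₁, hF₁g⟩ := exists_continuous_eqOn isClosed_closure (hh.comp_continuousOn hg)
  obtain ⟨F₂, hF₂, hF₂g⟩ := exists_continuous_eqOn isClosed_closure (hh.comp_continuousOn hg')
  have hF₂₁ : EqOn F₂ F₁ (frontier Ω) := fun z hz => by
    rw [hF₁g (frontier_subset_closure hz), hF₂g (frontier_subset_closure hz)]
    exact congrArg h (hfr hz)
  have htend : Filter.Tendsto H (nhds 0) (nhds 0) := by
    simpa only [ContinuousAt, hH] using H.continuousAt h0
  have hid : ∀ᶠ z in nhds 0, F₁ z = z := by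
    filter_upwards [hΩ, hloc, htend.eventually hsymm, H.open_source.mem_nhds h0]
      with z hzΩ hz hzsymm hzs
    rw [hF₁g (subset_closure hzΩ), Function.comp_apply, hz, hzsymm, H.left_inv hzs]
  obtain ⟨z, hz, hz0⟩ := exists_mem_closure_eq_zero_of_eqOn_compl hF₁ (hF₂.piecewise hF₂₁ hF₁) hb
    hΩ hid (fun z hz h0 => hzero z hz (hh0 _ ((hF₁g hz).symm.trans h0)))
    fun z hz => (piecewise_eq_of_notMem _ _ _ hz).symm
  refine ⟨z, hz, hh0 _ ?_⟩
  have hpw : Ω.piecewise F₂ F₁ z = F₂ z := by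
    by_cases hzΩ : z ∈ Ω
    · exact piecewise_eq_of_mem _ _ _ hzΩ
    · rw [piecewise_eq_of_notMem _ _ _ hzΩ]
      exact (hF₂₁ ⟨hz, fun hi => hzΩ (interior_subset hi)⟩).symm
  exact (hF₂g hz).symm.trans (hpw.symm.trans hz0)

theorem isEssentialOn_of_local_homotopy [FiniteDimensional ℝ X] (H : OpenPartialHomeomorph X Y)
    (h0 : 0 ∈ H.source) (hH : H 0 = 0) {Ω : Set X} (hb : Bornology.IsBounded Ω)
    (hΩ : Ω ∈ nhds 0) {g : X → Y} (hg : ContinuousOn g (closure Ω))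
    (hzero : ∀ z ∈ closure Ω, g z = 0 → z = 0) {K : ℝ × X → Y} {U : Set X} (hU : U ∈ nhds 0)
    (hK : ContinuousOn K (Icc 0 1 ×ˢ U)) (hK0 : ∀ z ∈ U, K (0, z) = g z)
    (hK1 : ∀ z ∈ U, K (1, z) = H z)
    (hKzero : ∀ t ∈ Icc (0 : ℝ) 1, ∀ z ∈ U, K (t, z) = 0 → z = 0) : IsEssentialOn g Ω := by
  classical
  obtain ⟨r, hr, hrU⟩ := Metric.nhds_basis_closedBall.mem_iff.1
    (Filter.inter_mem hU (interior_mem_nhds.2 hΩ))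
  have hBU : closedBall 0 r ⊆ U := hrU.trans inter_subset_left
  have hBΩ : closedBall 0 r ⊆ interior Ω := hrU.trans inter_subset_right
  have hclB : closure (ball (0 : X) r) ⊆ closedBall 0 r := closure_ball_subset_closedBall
  obtain ⟨τ, hτ0, hτ1, hτ⟩ := exists_continuous_zero_one_of_isClosed (X := X)
    (isOpen_ball (x := 0) (ε := r)).isClosed_compl (isClosed_closedBall (x := 0) (ε := r / 2))
    (disjoint_compl_left_iff_subset.2 (closedBall_subset_ball (by linarith)))
  have hfrB : ∀ z ∈ frontier (ball (0 : X) r), K (τ z, z) = g z := fun z hz => by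
    have hzB : z ∉ ball 0 r := (isOpen_ball.frontier_eq.le hz).2
    rw [hτ0 hzB, Pi.zero_apply, hK0 z (hBU (hclB hz.1))]
  refine IsEssentialOn.congr (g₁ := (ball 0 r).piecewise (fun z => K (τ z, z)) g)
    (isEssentialOn_of_eventuallyEq H h0 hH hb hΩ ?_ ?_ ?_) ?_
  · refine ContinuousOn.piecewise (fun z hz => hfrB z hz.2) ?_ (hg.mono inter_subset_left)
    exact hK.comp (by fun_prop) fun z hz => ⟨hτ z, hBU (hclB hz.2)⟩
  · filter_upwards [closedBall_mem_nhds 0 (half_pos hr)] with z hz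
    have hzB : z ∈ ball 0 r := closedBall_subset_ball (by linarith) hz
    rw [piecewise_eq_of_mem _ _ _ hzB, hτ1 hz, Pi.one_apply,
      hK1 z (hBU (ball_subset_closedBall hzB))]
  · intro z hz hz0
    by_cases hzB : z ∈ ball 0 r
    · rw [piecewise_eq_of_mem _ _ _ hzB] at hz0
      exact hKzero _ (hτ z) z (hBU (ball_subset_closedBall hzB)) hz0
    · rw [piecewise_eq_of_notMem _ _ _ hzB] at hz0
      exact hzero z hz hz0
  · exact fun z hz => piecewise_eq_of_notMem _ _ _ fun hzB =>
      hz.2 (hBΩ (ball_subset_closedBall hzB))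

end Essential

section Crossing

theorem exists_continuous_ne_zero_norm_sub_lt {E E' : Type*} [NormedAddCommGroup E]
    [NormedSpace ℝ E] [FiniteDimensional ℝ E] [NormedAddCommGroup E'] [NormedSpace ℝ E']
    [FiniteDimensional ℝ E'] (hdim : Module.finrank ℝ E < Module.finrank ℝ E') {K : Set E}
    (hK : IsCompact K) {k : E → E'} (hk : ContinuousOn k K) {η : ℝ} (hη : 0 < η) :
    ∃ k' : E → E', Continuous k' ∧ (∀ z, k' z ≠ 0) ∧ ∀ z ∈ K, ‖k' z - k z‖ < η := by
  obtain ⟨F, hFc, hFk⟩ := exists_continuous_eqOn hK.isClosed hk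
  obtain ⟨d, hd, hFd⟩ := Metric.uniformContinuousOn_iff.1
    ((hK.cthickening (r := 1)).uniformContinuousOn_of_continuous hFc.continuousOn) (η / 2)
    (half_pos hη)
  obtain ⟨g, hgc, hg⟩ :=
    hFc.exists_contDiff_dist_le_of_forall_mem_ball_dist_le (lt_min one_pos hd)
  have hgF : ∀ z ∈ K, ‖g z - F z‖ ≤ η / 2 := fun z hz => by
    rw [← dist_eq_norm]
    refine hg _ _ fun y hy => ?_
    rw [mem_ball, lt_min_iff] at hy
    exact (hFd _ (mem_cthickening_of_dist_le _ z _ _ hz hy.1.le) _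
      (self_subset_cthickening _ hz) hy.2).le
  -- `g` is smooth and raises the dimension, so its range misses arbitrarily small vectors.
  obtain ⟨c, hcr, hc⟩ := (hgc.of_le (by simp) : ContDiff ℝ 1 g)
    |>.dense_compl_range_of_finrank_lt_finrank hdim |>.exists_mem_open isOpen_ball
    ⟨(0 : E'), mem_ball_self (half_pos hη)⟩
  rw [mem_ball_zero_iff] at hc
  refine ⟨fun z => g z - c, hgc.continuous.sub continuous_const,
    fun z h0 => hcr ⟨z, sub_eq_zero.1 h0⟩, fun z hz => ?_⟩
  calc ‖g z - c - k z‖ = ‖(g z - F z) - c‖ := by rw [hFk hz, sub_right_comm]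
    _ ≤ ‖g z - F z‖ + ‖c‖ := norm_sub_le _ _
    _ < η := by linarith [hgF z hz]

lemma smul_sub_sub_smul_ne_zero {E : Type*} [NormedAddCommGroup E] [NormedSpace ℝ E] {a b b' : E}
    (h : ‖a‖ + ‖b' - b‖ < ‖b‖) {t : ℝ} (ht : t ∈ Icc (0 : ℝ) 1) :
    (1 - t) • (a - b) - t • b' ≠ 0 := by
  intro h0
  have hb : b = (1 - t) • a - t • (b' - b) := by
    rw [← sub_eq_zero, ← neg_eq_zero, ← h0]
    module
  have hle : ‖b‖ ≤ (1 - t) * ‖a‖ + t * ‖b' - b‖ := by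
    calc ‖b‖ = ‖(1 - t) • a - t • (b' - b)‖ := congrArg _ hb
      _ ≤ ‖(1 - t) • a‖ + ‖t • (b' - b)‖ := norm_sub_le _ _
      _ = _ := by
        rw [norm_smul, norm_smul, Real.norm_of_nonneg ht.1,
          Real.norm_of_nonneg (sub_nonneg.2 ht.2)]
  nlinarith [norm_nonneg a, norm_nonneg (b' - b), ht.1, ht.2]

lemma smul_prodMk_mem_ball {X Y : Type*} [NormedAddCommGroup X] [NormedSpace ℝ X]
    [NormedAddCommGroup Y] {s r : ℝ} (hs : |s| ≤ 1) {z : X × Y} {u : Y} (hu : ‖u‖ ≤ ‖z.2‖)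
    (hz : z ∈ ball (0 : X × Y) r) : (s • z.1, u) ∈ ball (0 : X × Y) r := by
  refine mem_ball_zero_iff.2 (lt_of_le_of_lt ?_ (mem_ball_zero_iff.1 hz))
  rw [Prod.norm_mk, Prod.norm_def, norm_smul, Real.norm_eq_abs]
  exact max_le_max (mul_le_of_le_one_left (norm_nonneg _) hs) hu

/-- A continuous map `ψ` of the closure of a bounded neighbourhood `O` of `0` into a product that
stays near the first factor (the second coordinate is less than `ρ / 2`) and whose boundary lies at
height exactly `ρ` in that factor. A disc that runs along the second factor is encoded by applying
this notion to `Prod.swap ∘ ψ`. -/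
structure IsHorizontalDisc {X A B : Type*} [NormedAddCommGroup X] [NormedAddCommGroup A]
    [NormedAddCommGroup B] (ρ : ℝ) (O : Set X) (ψ : X → A × B) : Prop where
  isBounded : Bornology.IsBounded O
  mem_nhds : O ∈ nhds 0
  continuousOn : ContinuousOn ψ (closure O)
  norm_snd_lt : ∀ v ∈ closure O, ‖(ψ v).2‖ < ρ / 2
  norm_fst_eq : ∀ v ∈ frontier O, ‖(ψ v).1‖ = ρ

variable {A B X Y : Type*} [NormedAddCommGroup A] [NormedSpace ℝ A] [NormedAddCommGroup B]
  [NormedSpace ℝ B] [NormedAddCommGroup X] [NormedAddCommGroup Y]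

/-- The homotopy from `φ u - ψ v` that shrinks the second coordinate of `ψ` to `0` and replaces its
first coordinate by `ψ'`, first removing that of `φ`. -/
def crossingHomotopy (ψ : X → A × B) (φ : Y → A × B) (ψ' : X → A) (w : ℝ × (X × Y)) : A × B :=
  ((1 - w.1) • ((φ w.2.2).1 - (ψ w.2.1).1) - w.1 • ψ' w.2.1, (φ w.2.2).2 - (1 - w.1) • (ψ w.2.1).2)

lemma continuousOn_crossingHomotopy {ψ : X → A × B} {φ : Y → A × B} {ψ' : X → A} {S : Set X}
    {T : Set Y} (hψ : ContinuousOn ψ S) (hφ : ContinuousOn φ T) (hψ' : ContinuousOn ψ' S) :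
    ContinuousOn (crossingHomotopy ψ φ ψ') (univ ×ˢ (S ×ˢ T)) := by
  have hφ' : ContinuousOn (fun w : ℝ × (X × Y) => φ w.2.2) (univ ×ˢ (S ×ˢ T)) :=
    hφ.comp (by fun_prop) fun w hw => hw.2.2
  have hψ₁ : ContinuousOn (fun w : ℝ × (X × Y) => ψ w.2.1) (univ ×ˢ (S ×ˢ T)) :=
    hψ.comp (by fun_prop) fun w hw => hw.2.1
  have hψ₂ : ContinuousOn (fun w : ℝ × (X × Y) => ψ' w.2.1) (univ ×ˢ (S ×ˢ T)) :=
    hψ'.comp (by fun_prop) fun w hw => hw.2.1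
  exact (((continuousOn_const.sub continuousOn_fst).smul (hφ'.fst.sub hψ₁.fst)).sub
    (continuousOn_fst.smul hψ₂)).prodMk
    (hφ'.snd.sub ((continuousOn_const.sub continuousOn_fst).smul hψ₁.snd))

lemma crossingHomotopy_ne_zero {ρ : ℝ} {O : Set X} {O' : Set Y} {ψ : X → A × B} {φ : Y → A × B}
    {ψ' : X → A} (hψ : IsHorizontalDisc ρ O ψ) (hφ : IsHorizontalDisc ρ O' (Prod.swap ∘ φ))
    (hψ' : ∀ v ∈ closure O, ‖ψ' v - (ψ v).1‖ < ρ / 2) {z : X × Y} (hz : z ∈ frontier (O ×ˢ O'))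
    {t : ℝ} (ht : t ∈ Icc (0 : ℝ) 1) : crossingHomotopy ψ φ ψ' (t, z) ≠ 0 := by
  rw [frontier_prod_eq] at hz
  intro h0
  rw [crossingHomotopy, Prod.mk_eq_zero] at h0
  rcases hz with ⟨hv, hu⟩ | ⟨hv, hu⟩
  · have hψ₂ := hψ.norm_snd_lt _ hv
    have hφ₂ : ‖(φ z.2).2‖ = ρ := hφ.norm_fst_eq _ hu
    have hle := norm_smul_le (1 - t) (ψ z.1).2
    rw [Real.norm_of_nonneg (sub_nonneg.2 ht.2), ← sub_eq_zero.1 h0.2, hφ₂] at hle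
    nlinarith [norm_nonneg (ψ z.1).2, ht.1, ht.2]
  · have hφ₁ : ‖(φ z.2).1‖ < ρ / 2 := hφ.norm_snd_lt _ hu
    refine smul_sub_sub_smul_ne_zero ?_ ht h0.1
    rw [hψ.norm_fst_eq _ hv]
    linarith [hψ' z.1 (frontier_subset_closure hv)]

variable [NormedSpace ℝ X] [FiniteDimensional ℝ X] [NormedSpace ℝ Y] [FiniteDimensional ℝ Y]

/-- Near the origin the difference is deformed to the local homeomorphism `H (-v, u) - H 0` through
`H (-t v, u) - H ((1 - t) v, 0)`. -/
theorem isEssentialOn_sub (H : OpenPartialHomeomorph (X × Y) (A × B)) (h0 : 0 ∈ H.source)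
    {O : Set X} {O' : Set Y} (hOb : Bornology.IsBounded O) (hOb' : Bornology.IsBounded O')
    (hO : O ∈ nhds 0) (hO' : O' ∈ nhds 0) {ψ : X → A × B} {φ : Y → A × B}
    (hψ : ContinuousOn ψ (closure O)) (hφ : ContinuousOn φ (closure O'))
    (hψ0 : ∀ᶠ v in nhds 0, ψ v = H (v, 0)) (hφ0 : ∀ᶠ u in nhds 0, φ u = H (0, u))
    (hcross : ∀ v ∈ closure O, ∀ u ∈ closure O', φ u = ψ v → v = 0 ∧ u = 0) :
    IsEssentialOn (fun z : X × Y => φ z.2 - ψ z.1) (O ×ˢ O') := by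
  let H' : OpenPartialHomeomorph (X × Y) (A × B) :=
    (((Homeomorph.neg X).prodCongr (Homeomorph.refl Y)).transOpenPartialHomeomorph
      H).transHomeomorph (Homeomorph.addRight (-(H 0)))
  have hH' (z : X × Y) : H' z = H (-z.1, z.2) - H 0 := (sub_eq_add_neg _ _).symm
  obtain ⟨r, hr, hrH⟩ := Metric.mem_nhds_iff.1 (H.open_source.mem_nhds h0)
  have hev : ∀ᶠ z : X × Y in nhds 0, ψ z.1 = H (z.1, 0) ∧ φ z.2 = H (0, z.2) :=
    hψ0.prodMk_nhds hφ0
  have hsrc₁ {t : ℝ} (ht : t ∈ Icc (0 : ℝ) 1) {z : X × Y} (hz : z ∈ ball (0 : X × Y) r) :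
      (-t • z.1, z.2) ∈ H.source :=
    hrH (smul_prodMk_mem_ball (by rw [abs_neg, abs_of_nonneg ht.1]; exact ht.2) le_rfl hz)
  have hsrc₂ {t : ℝ} (ht : t ∈ Icc (0 : ℝ) 1) {z : X × Y} (hz : z ∈ ball (0 : X × Y) r) :
      ((1 - t) • z.1, 0) ∈ H.source :=
    hrH (smul_prodMk_mem_ball (abs_le.2 ⟨by linarith [ht.2], by linarith [ht.1]⟩) (by simp) hz)
  refine isEssentialOn_of_local_homotopy H' (by simpa [H', Prod.zero_eq_mk] using h0)
    (by simp [hH', Prod.zero_eq_mk]) (hOb.prod hOb') (prod_mem_nhds hO hO') ?_ ?_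
    (K := fun w => H (-w.1 • w.2.1, w.2.2) - H ((1 - w.1) • w.2.1, 0))
    (Filter.inter_mem (ball_mem_nhds 0 hr) hev) ?_ ?_ ?_ ?_
  · rw [closure_prod_eq]
    exact (hφ.comp continuousOn_snd fun z hz => hz.2).sub
      (hψ.comp continuousOn_fst fun z hz => hz.1)
  · rw [closure_prod_eq]
    exact fun z hz hz0 => Prod.ext_iff.2 (hcross z.1 hz.1 z.2 hz.2 (sub_eq_zero.1 hz0))
  · exact (H.continuousOn.comp (by fun_prop) fun w hw => hsrc₁ hw.1 hw.2.1).sub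
      (H.continuousOn.comp (by fun_prop) fun w hw => hsrc₂ hw.1 hw.2.1)
  · intro z hz
    simp [hz.2.1, hz.2.2]
  · intro z _
    simp [hH', Prod.zero_eq_mk]
  · intro t ht z hz hz0
    have heq := H.injOn (hsrc₁ ht hz.1) (hsrc₂ ht hz.1) (sub_eq_zero.1 hz0)
    rw [Prod.mk.injEq] at heq
    refine Prod.ext ?_ heq.2
    calc z.1 = (1 - t) • z.1 - -t • z.1 := by module
      _ = 0 := by rw [heq.1, sub_self]

/-- If `A` had larger dimension than `X`, the first coordinate of `ψ` could be perturbed to a map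
without zeros. -/
theorem finrank_le_of_isHorizontalDisc [FiniteDimensional ℝ A]
    (H : OpenPartialHomeomorph (X × Y) (A × B)) (h0 : 0 ∈ H.source) {ρ : ℝ} {O : Set X}
    {O' : Set Y} {ψ : X → A × B} {φ : Y → A × B} (hψ : IsHorizontalDisc ρ O ψ)
    (hφ : IsHorizontalDisc ρ O' (Prod.swap ∘ φ)) (hψ0 : ∀ᶠ v in nhds 0, ψ v = H (v, 0))
    (hφ0 : ∀ᶠ u in nhds 0, φ u = H (0, u))
    (hcross : ∀ v ∈ closure O, ∀ u ∈ closure O', φ u = ψ v → v = 0 ∧ u = 0) :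
    Module.finrank ℝ A ≤ Module.finrank ℝ X := by
  have hφc : ContinuousOn φ (closure O') := by
    simpa [Function.comp_def] using continuous_swap.comp_continuousOn hφ.continuousOn
  have hρ : 0 < ρ / 2 := (norm_nonneg _).trans_lt
    (hψ.norm_snd_lt 0 (subset_closure (mem_of_mem_nhds hψ.mem_nhds)))
  by_contra! hlt
  obtain ⟨ψ', hψ'c, hψ'0, hψ'⟩ := exists_continuous_ne_zero_norm_sub_lt hlt
    hψ.isBounded.isCompact_closure (continuous_fst.comp_continuousOn hψ.continuousOn) hρ
  have hess := isEssentialOn_sub H h0 hψ.isBounded hφ.isBounded hψ.mem_nhds hφ.mem_nhds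
    hψ.continuousOn hφc hψ0 hφ0 hcross
  have hG := (continuousOn_crossingHomotopy hψ.continuousOn hφc hψ'c.continuousOn).mono
    (prod_mono_left (subset_univ (Icc 0 1)))
  rw [← closure_prod_eq] at hG
  obtain ⟨z, -, hz0⟩ := hess.exists_eq_zero_of_homotopy
    (hψ.isBounded.prod hφ.isBounded).isCompact_closure hG
    (fun z _ => by simp [crossingHomotopy, Prod.ext_iff])
    fun z hz t ht => crossingHomotopy_ne_zero hψ hφ hψ' hz ht
  simp only [crossingHomotopy, sub_self, zero_smul, zero_sub, Prod.mk_eq_zero, neg_eq_zero,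
    one_smul] at hz0
  exact hψ'0 _ hz0.1

end Crossing

section Iterates

variable {f : M ≃ₜ M} {α ε : ℝ}

lemma iterZ_eq_zpow (f : M ≃ₜ M) (k : ℤ) : iterZ f k = ⇑(f ^ k) :=
  let toPerm : (M ≃ₜ M) →* Equiv.Perm M :=
    { toFun := Homeomorph.toEquiv, map_one' := rfl, map_mul' := fun _ _ => rfl }
  congrArg DFunLike.coe (map_zpow toPerm f k).symm

lemma continuous_iterZ (f : M ≃ₜ M) (k : ℤ) : Continuous (iterZ f k) := by
  rw [iterZ_eq_zpow]
  exact (f ^ k).continuous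

@[simp]
lemma iterZ_zero (f : M ≃ₜ M) (z : M) : iterZ f 0 z = z := rfl

lemma iterZ_natCast (f : M ≃ₜ M) (l : ℕ) (z : M) : iterZ f l z = (f.toEquiv ^ l) z := by
  rw [iterZ, zpow_natCast]

lemma iterZ_add (f : M ≃ₜ M) (j k : ℤ) (z : M) : iterZ f (j + k) z = iterZ f j (iterZ f k z) := by
  rw [iterZ, zpow_add, Equiv.Perm.mul_apply, iterZ, iterZ]

@[simp]
lemma iterZ_neg_iterZ (f : M ≃ₜ M) (k : ℤ) (z : M) : iterZ f (-k) (iterZ f k z) = z := by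
  rw [← iterZ_add, neg_add_cancel, iterZ_zero]

@[simp]
lemma iterZ_iterZ_neg (f : M ≃ₜ M) (k : ℤ) (z : M) : iterZ f k (iterZ f (-k) z) = z := by
  rw [← iterZ_add, add_neg_cancel, iterZ_zero]

lemma injective_iterZ (f : M ≃ₜ M) (k : ℤ) : Function.Injective (iterZ f k) :=
  Function.LeftInverse.injective (iterZ_neg_iterZ f k)

lemma iterZ_symm (f : M ≃ₜ M) (k : ℤ) (z : M) : iterZ f.symm k z = iterZ f (-k) z := by
  rw [iterZ_eq_zpow, iterZ_eq_zpow, ← inv_zpow']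
  rfl

lemma iterZ_mul_eq_of_iterZ_eq {p : M} {l : ℤ} (hp : iterZ f l p = p) (k : ℤ) :
    iterZ f (l * k) p = p := by
  rw [iterZ, zpow_mul]
  exact Function.IsFixedPt.perm_zpow hp k

lemma Ws_symm (f : M ≃ₜ M) (p : M) : Ws f.symm p = Wu f p := by
  ext y
  simp only [Ws, Wu, mem_ofPred_eq, iterZ_symm, ← Filter.map_neg_atTop, Filter.tendsto_map'_iff,
    Function.comp_def]

lemma WsLoc_symm (f : M ≃ₜ M) (ε : ℝ) (p : M) : WsLoc f.symm ε p = WuLoc f ε p := by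
  ext y
  simp only [WsLoc, WuLoc, mem_ofPred_eq, iterZ_symm]
  exact ⟨fun h k hk => by simpa using h (-k) (neg_nonneg.2 hk), fun h k hk => h _ (neg_nonpos.2 hk)⟩

lemma SpSet_symm (f : M ≃ₜ M) (x : M) (ν : ℝ) (p : M) : SpSet f.symm x ν p = UpSet f x ν p := by
  rw [SpSet, UpSet, Ws_symm]

lemma IsExpansive.symm (h : IsExpansive f α) : IsExpansive f.symm α := fun a b hab =>
  let ⟨k, hk⟩ := h a b hab
  ⟨-k, by simpa only [iterZ_symm, neg_neg] using hk⟩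

lemma mem_Ws_self (f : M ≃ₜ M) (p : M) : p ∈ Ws f p := by
  simp only [Ws, mem_ofPred_eq, dist_self, tendsto_const_nhds]

lemma iterZ_mem_Ws_iff {p y : M} (j : ℤ) : iterZ f j y ∈ Ws f (iterZ f j p) ↔ y ∈ Ws f p := by
  simp only [Ws, mem_ofPred_eq, ← iterZ_add]
  conv_rhs => rw [← Filter.map_add_atTop_eq j, Filter.tendsto_map'_iff]
  rfl

lemma iterZ_mem_WsLoc {p y : M} (h : y ∈ WsLoc f ε p) {j : ℤ} (hj : 0 ≤ j) :
    iterZ f j y ∈ WsLoc f ε (iterZ f j p) := fun k hk => by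
  rw [← iterZ_add, ← iterZ_add]
  exact h _ (add_nonneg hk hj)

lemma isClosed_setOf_forall_dist_iterZ_le (f : M ≃ₜ M) (ε : ℝ) (a : ℤ) :
    IsClosed {w : M × M | ∀ k, a ≤ k → dist (iterZ f k w.1) (iterZ f k w.2) ≤ ε} := by
  simp only [ofPred_forall]
  exact isClosed_iInter fun k => isClosed_iInter fun _ =>
    isClosed_le (((continuous_iterZ f k).comp continuous_fst).dist
      ((continuous_iterZ f k).comp continuous_snd)) continuous_const

lemma isClosed_setOf_mem_WsLoc (f : M ≃ₜ M) (ε : ℝ) :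
    IsClosed {w : M × M | w.2 ∈ WsLoc f ε w.1} :=
  isClosed_setOf_forall_dist_iterZ_le f ε 0

lemma isClosed_WsLoc (f : M ≃ₜ M) (ε : ℝ) (p : M) : IsClosed (WsLoc f ε p) :=
  (isClosed_setOf_mem_WsLoc f ε).preimage (Continuous.prodMk_right p)

theorem IsExpansive.eq_of_forall_dist_le (hexp : IsExpansive f α) (hεα : ε < α) {p y : M}
    (h : ∀ k, dist (iterZ f k p) (iterZ f k y) ≤ ε) : p = y := by
  by_contra hne
  obtain ⟨k, hk⟩ := hexp p y hne
  exact (hk.trans_le (h k)).not_gt hεα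

theorem IsExpansive.eq_of_mem_WsLoc_of_mem_WuLoc (hexp : IsExpansive f α) (hεα : ε < α) {p y : M}
    (hs : y ∈ WsLoc f ε p) (hu : y ∈ WuLoc f ε p) : p = y :=
  hexp.eq_of_forall_dist_le hεα fun k => (le_total 0 k).elim (hs k) (hu k)

/-- The pairs whose orbits stay `ε`-close from time `-N` on form a decreasing sequence of compact
sets which, by expansivity, shrinks to the diagonal. -/
theorem IsExpansive.exists_forall_dist_iterZ_lt [CompactSpace M] (hexp : IsExpansive f α)
    (hεα : ε < α) {η : ℝ} (hη : 0 < η) :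
    ∃ N : ℕ, ∀ p, ∀ y ∈ WsLoc f ε p, ∀ k : ℤ, N ≤ k → dist (iterZ f k p) (iterZ f k y) < η := by
  let A (N : ℕ) : Set (M × M) :=
    {w | ∀ k : ℤ, -(N : ℤ) ≤ k → dist (iterZ f k w.1) (iterZ f k w.2) ≤ ε}
  have hA (N : ℕ) : IsClosed (A N) := isClosed_setOf_forall_dist_iterZ_le f ε _
  have hanti : Antitone A := fun i j hij w hw k hk => hw k (by lia)
  have hdiag : ∀ w ∈ ⋂ N, A N, {w : M × M | dist w.1 w.2 < η} ∈ nhds w := fun w hw => by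
    have heq : w.1 = w.2 := hexp.eq_of_forall_dist_le hεα fun k =>
      mem_iInter.1 hw k.natAbs k (by lia)
    exact (isOpen_lt continuous_dist continuous_const).mem_nhds (by simpa [heq] using hη)
  obtain ⟨N, hN⟩ := exists_subset_nhds_of_isCompact'
    (directed_of_isDirected_le fun i j h => hanti h) (fun N => (hA N).isCompact) hA hdiag
  refine ⟨N, fun p y hy k hk => hN (a := (iterZ f k p, iterZ f k y)) fun j hj => ?_⟩
  simp only [← iterZ_add]
  exact hy _ (by lia)

theorem IsExpansive.WsLoc_subset_Ws [CompactSpace M] (hexp : IsExpansive f α) (hεα : ε < α)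
    (p : M) : WsLoc f ε p ⊆ Ws f p := fun y hy => Metric.tendsto_atTop.2 fun η hη =>
  let ⟨N, hN⟩ := hexp.exists_forall_dist_iterZ_lt hεα hη
  ⟨N, fun k hk => by simpa using hN p y hy k hk⟩

theorem mem_Ws_iff_tendsto {q z : M} {l : ℕ} (hl : 1 ≤ l) (hq : iterZ f l q = q) :
    z ∈ Ws f q ↔ Filter.Tendsto (fun k : ℕ => iterZ f (l * k) z) Filter.atTop (nhds q) := by
  have hl0 : (0 : ℤ) < l := by exact_mod_cast hl
  refine ⟨fun h => ?_, fun h => Metric.tendsto_atTop.2 fun η hη => ?_⟩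
  · rw [tendsto_iff_dist_tendsto_zero]
    refine (h.comp (tendsto_natCast_atTop_atTop.const_mul_atTop' hl0)).congr fun k => ?_
    rw [Function.comp_apply, iterZ_mul_eq_of_iterZ_eq hq, dist_comm]
  · have hnear : ∀ᶠ w in nhds q, ∀ i ∈ Finset.range l, dist (iterZ f i q) (iterZ f i w) < η :=
      (Filter.eventually_all_finset _).2 fun i _ =>
        (continuous_const.dist (continuous_iterZ f i)).continuousAt.eventually
          (gt_mem_nhds (by simpa using hη))
    obtain ⟨K, hK⟩ := Filter.eventually_atTop.1 (h.eventually hnear)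
    refine ⟨l * K, fun j hj => ?_⟩
    have hj0 : 0 ≤ j := le_trans (by positivity) hj
    obtain ⟨k, hk⟩ := Int.eq_ofNat_of_zero_le (Int.ediv_nonneg hj0 hl0.le)
    obtain ⟨i, hi⟩ := Int.eq_ofNat_of_zero_le (Int.emod_nonneg j hl0.ne')
    have hj' : j = i + l * k := by rw [← hk, ← hi, Int.emod_add_mul_ediv]
    have hil : i < l := by exact_mod_cast hi ▸ Int.emod_lt_of_pos j hl0
    have hKk : K ≤ k := by
      have := (Int.le_ediv_iff_mul_le hl0).2 ((mul_comm _ _).trans_le hj)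
      rw [hk] at this
      exact_mod_cast this
    rw [Real.dist_eq, sub_zero, abs_of_nonneg dist_nonneg, hj', iterZ_add, iterZ_add,
      iterZ_mul_eq_of_iterZ_eq hq]
    exact hK k hKk i (Finset.mem_range.2 hil)

theorem eq_of_mem_Ws_of_mem_Ws {p q z : M} {l m : ℕ} (hl : 1 ≤ l) (hm : 1 ≤ m)
    (hp : iterZ f l p = p) (hq : iterZ f m q = q) (hzp : z ∈ Ws f p) (hzq : z ∈ Ws f q) :
    p = q := by
  have hp' : iterZ f (l * m : ℕ) p = p := by
    rw [Nat.cast_mul, iterZ_mul_eq_of_iterZ_eq hp]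
  have hq' : iterZ f (l * m : ℕ) q = q := by
    rw [Nat.cast_mul, mul_comm, iterZ_mul_eq_of_iterZ_eq hq]
  exact tendsto_nhds_unique ((mem_Ws_iff_tendsto (Nat.mul_pos hl hm) hp').1 hzp)
    ((mem_Ws_iff_tendsto (Nat.mul_pos hl hm) hq').1 hzq)

theorem IsExpansive.eventually_forall_iterZ_mem [CompactSpace M] (hexp : IsExpansive f α)
    (hεα : ε < α) {p : M} {l : ℕ} (hl : 1 ≤ l) (hp : iterZ f l p = p) {W : Set M}
    (hW : W ∈ nhds p) :
    ∀ᶠ z in nhds p, z ∈ WsLoc f ε p → ∀ k : ℕ, iterZ f (l * k) z ∈ W := by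
  obtain ⟨η, hη, hηW⟩ := Metric.mem_nhds_iff.1 hW
  obtain ⟨N, hN⟩ := hexp.exists_forall_dist_iterZ_lt hεα hη
  have hfin : ∀ᶠ z in nhds p, ∀ k ∈ Finset.range N, iterZ f (l * k) z ∈ W :=
    (Filter.eventually_all_finset _).2 fun k _ =>
      (continuous_iterZ f _).continuousAt.eventually_mem
        (by rwa [iterZ_mul_eq_of_iterZ_eq hp])
  filter_upwards [hfin] with z hz hzs k
  rcases lt_or_ge k N with hk | hk
  · exact hz k (Finset.mem_range.2 hk)
  · have hkl : (N : ℤ) ≤ l * k := by exact_mod_cast hk.trans (Nat.le_mul_of_pos_left k hl)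
    have hdist := hN p z hzs _ hkl
    rw [iterZ_mul_eq_of_iterZ_eq hp, dist_comm] at hdist
    exact hηW hdist

end Iterates

section HyperbolicCharts

/-- A chart `e` at the `l`-periodic point `p` that conjugates `f ^ l` to `(a, b) ↦ (a / 2, 2 b)`:
the membership `p ∈ PerHr f n r` in terms of open partial homeomorphisms, with arbitrary normed
spaces as factors so that swapping them exchanges `f` and its inverse. -/
structure IsHyperbolicChart {E F : Type*} [NormedAddCommGroup E] [NormedSpace ℝ E]
    [NormedAddCommGroup F] [NormedSpace ℝ F] (f : M ≃ₜ M) (p : M) (l : ℕ)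
    (e : OpenPartialHomeomorph M (E × F)) : Prop where
  one_le : 1 ≤ l
  iterZ_eq : iterZ f l p = p
  mem_source : p ∈ e.source
  map_eq_zero : e p = 0
  map_iterZ : ∀ z ∈ e.source, iterZ f l z ∈ e.source →
    e (iterZ f l z) = ((1 / 2 : ℝ) • (e z).1, (2 : ℝ) • (e z).2)

lemma modelL_apply {n r : ℕ} (w : ModelSp n r) :
    modelL n r w = ((1 / 2 : ℝ) • w.1, (2 : ℝ) • w.2) := by
  ext i
  · simp [modelL, div_eq_inv_mul]
  · simp [modelL]

lemma exists_openPartialHomeomorph_of_homeomorph {X Y : Type*} [TopologicalSpace X]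
    [TopologicalSpace Y] {U : Set X} {V : Set Y} (hU : IsOpen U) (hV : IsOpen V)
    (hne : U.Nonempty) (h : U ≃ₜ V) :
    ∃ e : OpenPartialHomeomorph X Y, e.source = U ∧ ∀ z (hz : z ∈ U), e z = h ⟨z, hz⟩ := by
  let U' : TopologicalSpace.Opens X := ⟨U, hU⟩
  let V' : TopologicalSpace.Opens Y := ⟨V, hV⟩
  let iU := U'.openPartialHomeomorphSubtypeCoe hne.to_subtype
  let iV := V'.openPartialHomeomorphSubtypeCoe (hne.to_subtype.map h)
  refine ⟨(iU.symm.trans h.toOpenPartialHomeomorph).trans iV, by ext; simp [iU, iV, U'], ?_⟩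
  intro z hz
  have hiU : iU.symm z = ⟨z, hz⟩ := iU.left_inv (x := ⟨z, hz⟩) (mem_univ _)
  simp only [OpenPartialHomeomorph.coe_trans, Function.comp_apply, hiU]
  rfl

theorem mem_PerHr_iff {f : M ≃ₜ M} {n r : ℕ} {p : M} : p ∈ PerHr f n r ↔
    ∃ (l : ℕ) (e : OpenPartialHomeomorph M (ModelSp n r)), IsHyperbolicChart f p l e := by
  constructor
  · rintro ⟨l, hl, hper, U, V, h, hU, hV, -, hp, hp0, hconj⟩
    obtain ⟨e, rfl, he⟩ := exists_openPartialHomeomorph_of_homeomorph hU hV ⟨p, hp⟩ h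
    refine ⟨l, e, hl, (iterZ_natCast f l p).trans hper, hp, (he p hp).trans hp0, ?_⟩
    intro z hz hz'
    rw [iterZ_natCast] at hz' ⊢
    rw [he _ hz', he z hz, ← modelL_apply]
    exact hconj z hz hz'
  · rintro ⟨l, e, he⟩
    refine ⟨l, he.one_le, (iterZ_natCast f l p).symm.trans he.iterZ_eq, e.source, e.target,
      e.toHomeomorphSourceTarget, e.open_source, e.open_target,
      he.map_eq_zero ▸ e.map_source he.mem_source, he.mem_source, he.map_eq_zero, ?_⟩
    intro z hz hz'
    have hmap := he.map_iterZ z hz (by rwa [iterZ_natCast])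
    rwa [iterZ_natCast, ← modelL_apply] at hmap

namespace IsHyperbolicChart

variable {E F : Type*} [NormedAddCommGroup E] [NormedSpace ℝ E] [NormedAddCommGroup F]
  [NormedSpace ℝ F] {f : M ≃ₜ M} {p : M} {l : ℕ} {e : OpenPartialHomeomorph M (E × F)}

theorem swap (h : IsHyperbolicChart f p l e) :
    IsHyperbolicChart f.symm p l (e.transHomeomorph (Homeomorph.prodComm E F)) where
  one_le := h.one_le
  iterZ_eq := by
    rw [iterZ_symm]
    conv_lhs => rw [← h.iterZ_eq, iterZ_neg_iterZ]
  mem_source := h.mem_source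
  map_eq_zero := congrArg Prod.swap h.map_eq_zero
  map_iterZ := fun z hz hz' => by
    rw [iterZ_symm] at hz' ⊢
    have hmap := h.map_iterZ _ hz' (by rwa [iterZ_iterZ_neg])
    rw [iterZ_iterZ_neg] at hmap
    simp only [OpenPartialHomeomorph.transHomeomorph_apply, Function.comp_apply, hmap,
      Homeomorph.coe_prodComm, Prod.swap, smul_smul]
    norm_num

theorem iterate (h : IsHyperbolicChart f p l e) (j : ℤ) :
    IsHyperbolicChart f (iterZ f j p) l ((f ^ (-j)).transOpenPartialHomeomorph e) where
  one_le := h.one_le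
  iterZ_eq := by rw [← iterZ_add, add_comm, iterZ_add, h.iterZ_eq]
  mem_source := by
    rw [Homeomorph.transOpenPartialHomeomorph_source, ← iterZ_eq_zpow, mem_preimage,
      iterZ_neg_iterZ]
    exact h.mem_source
  map_eq_zero := by
    rw [Homeomorph.transOpenPartialHomeomorph_apply, ← iterZ_eq_zpow, Function.comp_apply,
      iterZ_neg_iterZ]
    exact h.map_eq_zero
  map_iterZ := fun z hz hz' => by
    rw [Homeomorph.transOpenPartialHomeomorph_source, ← iterZ_eq_zpow, mem_preimage] at hz hz'
    have hcomm : iterZ f (-j) (iterZ f l z) = iterZ f l (iterZ f (-j) z) := by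
      rw [← iterZ_add, add_comm, iterZ_add]
    rw [hcomm] at hz'
    rw [Homeomorph.transOpenPartialHomeomorph_apply, ← iterZ_eq_zpow, Function.comp_apply,
      Function.comp_apply, hcomm]
    exact h.map_iterZ _ hz hz'

end IsHyperbolicChart

theorem iterZ_mem_PerHr {f : M ≃ₜ M} {n r : ℕ} {p : M} (h : p ∈ PerHr f n r) (j : ℤ) :
    iterZ f j p ∈ PerHr f n r := by
  obtain ⟨l, e, he⟩ := mem_PerHr_iff.1 h
  exact mem_PerHr_iff.2 ⟨l, _, he.iterate j⟩

end HyperbolicCharts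

section StableParametrizations

variable {E F : Type*} [NormedAddCommGroup E] [NormedSpace ℝ E] [NormedAddCommGroup F]
  [NormedSpace ℝ F] {f : M ≃ₜ M} {α ε R : ℝ} {q : M} {l : ℕ} {e : OpenPartialHomeomorph M (E × F)}

/-- A continuous injection of the ball of radius `R` into the stable set of `q` that already covers
the `ε`-local stable set on the ball of radius `R / 2`. -/
structure IsStableParametrization {E : Type*} [NormedAddCommGroup E] (f : M ≃ₜ M) (ε : ℝ) (q : M)
    (R : ℝ) (ψ : E → M) : Prop where
  pos : 0 < R
  continuousOn : ContinuousOn ψ (ball 0 R)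
  injOn : InjOn ψ (ball 0 R)
  map_zero : ψ 0 = q
  mem_Ws : ∀ v ∈ ball 0 R, ψ v ∈ Ws f q
  WsLoc_subset : WsLoc f ε q ⊆ ψ '' ball 0 (R / 2)

lemma half_pow_smul_mem_ball_iff {v : E} {N : ℕ} {c : ℝ} :
    (1 / 2 : ℝ) ^ N • v ∈ ball (0 : E) c ↔ v ∈ ball (0 : E) (2 ^ N * c) := by
  rw [mem_ball_zero_iff, mem_ball_zero_iff, norm_smul, norm_pow, Real.norm_of_nonneg (by norm_num),
    one_div, inv_pow, inv_mul_lt_iff₀ (by positivity)]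

namespace IsHyperbolicChart

lemma symm_zero (h : IsHyperbolicChart f q l e) : e.symm 0 = q := by
  rw [← h.map_eq_zero, e.left_inv h.mem_source]

lemma zero_mem_target (h : IsHyperbolicChart f q l e) : (0 : E × F) ∈ e.target :=
  h.map_eq_zero ▸ e.map_source h.mem_source

lemma eventually_symm (h : IsHyperbolicChart f q l e) {P : M → Prop} (hP : ∀ᶠ z in nhds q, P z) :
    ∀ᶠ w in nhds 0, P (e.symm w) :=
  (e.continuousAt_symm h.zero_mem_target).eventually (by rwa [h.symm_zero])

lemma eventually_apply (h : IsHyperbolicChart f q l e) {P : E × F → Prop}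
    (hP : ∀ᶠ w in nhds 0, P w) : ∀ᶠ z in nhds q, P (e z) :=
  (e.continuousAt h.mem_source).eventually (by rwa [h.map_eq_zero])

lemma snd_apply_iterZ (h : IsHyperbolicChart f q l e) {z : M}
    (hz : ∀ k : ℕ, iterZ f (l * k) z ∈ e.source) (k : ℕ) :
    (e (iterZ f (l * k) z)).2 = (2 : ℝ) ^ k • (e z).2 := by
  induction k with
  | zero => simp
  | succ k ih =>
    have hsucc : (l : ℤ) * (k + 1 : ℕ) = l + l * k := by push_cast; ring
    have hmem := hz (k + 1)
    rw [hsucc, iterZ_add] at hmem ⊢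
    rw [h.map_iterZ _ (hz k) hmem, ih, smul_smul, pow_succ']

/-- A nonzero second coordinate is doubled by every application of `f ^ l`, so the orbit cannot
stay in the chart. -/
theorem eventually_snd_eq_zero [CompactSpace M] (hexp : IsExpansive f α) (hεα : ε < α)
    (h : IsHyperbolicChart f q l e) : ∀ᶠ z in nhds q, z ∈ WsLoc f ε q → (e z).2 = 0 := by
  have hW : ∀ᶠ z in nhds q, z ∈ e.source ∧ ‖e z‖ < 1 :=
    (e.open_source.eventually_mem h.mem_source).and
      (h.eventually_apply (continuous_norm.continuousAt.eventually (gt_mem_nhds (by simp))))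
  filter_upwards [hexp.eventually_forall_iterZ_mem hεα h.one_le h.iterZ_eq hW] with z hz hzs
  by_contra hne
  obtain ⟨k, hk⟩ := pow_unbounded_of_one_lt (1 / ‖(e z).2‖) (one_lt_two (α := ℝ))
  have hlt : ‖(e (iterZ f (l * k) z)).2‖ < 1 := (norm_snd_le _).trans_lt (hz hzs k).2
  rw [h.snd_apply_iterZ (fun k => (hz hzs k).1), norm_smul, norm_pow, Real.norm_two] at hlt
  rw [div_lt_iff₀ (norm_pos_iff.2 hne)] at hk
  exact hk.not_gt hlt

lemma exists_forall_iterZ_symm_eq (h : IsHyperbolicChart f q l e) :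
    ∃ c > 0, ∀ v ∈ ball (0 : E) c, (v, (0 : F)) ∈ e.target ∧
      ∀ k : ℕ, iterZ f (l * k) (e.symm (v, 0)) = e.symm ((1 / 2 : ℝ) ^ k • v, 0) := by
  have hsrc : ∀ᶠ z in nhds q, iterZ f l z ∈ e.source :=
    (continuous_iterZ f l).continuousAt.eventually_mem
      (by rw [h.iterZ_eq]; exact e.open_source.mem_nhds h.mem_source)
  have hev : ∀ᶠ v in nhds (0 : E), (v, (0 : F)) ∈ e.target ∧
      iterZ f l (e.symm (v, 0)) ∈ e.source :=
    (Continuous.prodMk_left (0 : F)).continuousAt.eventually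
      ((e.open_target.eventually_mem h.zero_mem_target).and (h.eventually_symm hsrc))
  obtain ⟨c, hc, hcv⟩ := Metric.eventually_nhds_iff_ball.1 hev
  refine ⟨c, hc, fun v hv => ⟨(hcv v hv).1, fun k => ?_⟩⟩
  induction k with
  | zero => simp
  | succ k ih =>
    have hmem : (1 / 2 : ℝ) ^ k • v ∈ ball (0 : E) c := by
      have hle : (1 / 2 : ℝ) ^ k ≤ 1 := pow_le_one₀ (by norm_num) (by norm_num)
      rw [mem_ball_zero_iff] at hv ⊢
      rw [norm_smul, norm_pow, Real.norm_of_nonneg (by norm_num)]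
      exact (mul_le_of_le_one_left (norm_nonneg v) hle).trans_lt hv
    have hmap := h.map_iterZ _ (e.map_target (hcv _ hmem).1) (hcv _ hmem).2
    rw [e.right_inv (hcv _ hmem).1, smul_zero, smul_smul, ← pow_succ'] at hmap
    have hsucc : (l : ℤ) * (k + 1 : ℕ) = l + l * k := by push_cast; ring
    rw [hsucc, iterZ_add, ih, ← hmap, e.left_inv (hcv _ hmem).2]

lemma symm_mem_Ws (h : IsHyperbolicChart f q l e) {v : E}
    (hv : ∀ k : ℕ, iterZ f (l * k) (e.symm (v, 0)) = e.symm ((1 / 2 : ℝ) ^ k • v, 0)) :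
    e.symm (v, 0) ∈ Ws f q := by
  have hhalf : Filter.Tendsto (fun k : ℕ => (1 / 2 : ℝ) ^ k • v) Filter.atTop (nhds 0) := by
    simpa using (tendsto_pow_atTop_nhds_zero_of_lt_one (r := (1 / 2 : ℝ)) (by norm_num)
      (by norm_num)).smul_const v
  have hsymm : Filter.Tendsto e.symm (nhds (0, 0)) (nhds q) :=
    h.symm_zero ▸ e.continuousAt_symm h.zero_mem_target
  rw [mem_Ws_iff_tendsto h.one_le h.iterZ_eq]
  simpa only [hv, Function.comp_def] using
    hsymm.comp (hhalf.prodMk_nhds tendsto_const_nhds)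

lemma exists_forall_mem_WsLoc_iterZ_eq [CompactSpace M] (hexp : IsExpansive f α) (hεα : ε < α)
    (h : IsHyperbolicChart f q l e) {c : ℝ} (hc : 0 < c) :
    ∃ N : ℕ, ∀ z ∈ WsLoc f ε q, ∃ v ∈ ball (0 : E) c, iterZ f (l * N) z = e.symm (v, 0) := by
  have hev : ∀ᶠ z in nhds q, (z ∈ WsLoc f ε q → (e z).2 = 0) ∧ z ∈ e.source ∧ ‖e z‖ < c :=
    (h.eventually_snd_eq_zero hexp hεα).and ((e.open_source.eventually_mem h.mem_source).and
      (h.eventually_apply (continuous_norm.continuousAt.eventually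
        (gt_mem_nhds (by simpa using hc)))))
  obtain ⟨η, hη, hball⟩ := Metric.eventually_nhds_iff_ball.1 hev
  obtain ⟨N, hN⟩ := hexp.exists_forall_dist_iterZ_lt hεα hη
  refine ⟨N, fun z hz => ?_⟩
  have hzs : iterZ f (l * N) z ∈ WsLoc f ε q := by
    simpa only [iterZ_mul_eq_of_iterZ_eq h.iterZ_eq] using
      iterZ_mem_WsLoc hz (by positivity : (0 : ℤ) ≤ l * N)
  have hdist := hN q z hz (l * N) (by exact_mod_cast Nat.le_mul_of_pos_left N h.one_le)
  rw [iterZ_mul_eq_of_iterZ_eq h.iterZ_eq, dist_comm] at hdist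
  obtain ⟨hsnd, hsrc, hnorm⟩ := hball _ hdist
  refine ⟨(e (iterZ f (l * N) z)).1, mem_ball_zero_iff.2 ((norm_fst_le _).trans_lt hnorm), ?_⟩
  rw [← hsnd hzs, e.left_inv hsrc]

/-- Pulling the flat local stable disc of the chart back by a sufficiently large iterate of `f`
makes it cover the whole `ε`-local stable set. -/
theorem exists_isStableParametrization [CompactSpace M] (hexp : IsExpansive f α) (hεα : ε < α)
    (h : IsHyperbolicChart f q l e) : ∃ (R : ℝ) (ψ : E → M), IsStableParametrization f ε q R ψ ∧
      ∀ᶠ v in nhds 0, ψ v = e.symm (v, 0) := by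
  obtain ⟨c, hc, hcv⟩ := h.exists_forall_iterZ_symm_eq
  obtain ⟨N, hN⟩ := h.exists_forall_mem_WsLoc_iterZ_eq hexp hεα (half_pos hc)
  have hscale : ∀ v ∈ ball (0 : E) (2 ^ N * c), (1 / 2 : ℝ) ^ N • v ∈ ball (0 : E) c :=
    fun v hv => half_pow_smul_mem_ball_iff.2 hv
  refine ⟨2 ^ N * c, fun v => iterZ f (-(l * N)) (e.symm ((1 / 2 : ℝ) ^ N • v, 0)),
    ⟨by positivity, ?_, ?_, ?_, ?_, ?_⟩, ?_⟩
  · exact (continuous_iterZ f _).comp_continuousOn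
      (e.continuousOn_symm.comp (by fun_prop) fun v hv => (hcv _ (hscale v hv)).1)
  · intro v hv w hw hvw
    have heq := e.symm.injOn (hcv _ (hscale v hv)).1 (hcv _ (hscale w hw)).1
      (injective_iterZ f _ hvw)
    exact smul_right_injective E (by positivity : (1 / 2 : ℝ) ^ N ≠ 0) (Prod.ext_iff.1 heq).1
  · have hfix : iterZ f (l * -(N : ℤ)) q = q := iterZ_mul_eq_of_iterZ_eq h.iterZ_eq _
    rw [smul_zero, ← Prod.zero_eq_mk, h.symm_zero, ← mul_neg, hfix]
  · intro v hv
    rw [← iterZ_mem_Ws_iff (l * N), iterZ_iterZ_neg, iterZ_mul_eq_of_iterZ_eq h.iterZ_eq]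
    exact h.symm_mem_Ws (hcv _ (hscale v hv)).2
  · intro z hz
    obtain ⟨v, hv, hvz⟩ := hN z hz
    have hcancel : (1 / 2 : ℝ) ^ N • (2 : ℝ) ^ N • v = v := by
      rw [smul_smul, ← mul_pow, one_div_mul_cancel two_ne_zero, one_pow, one_smul]
    refine ⟨(2 : ℝ) ^ N • v, ?_, ?_⟩
    · rwa [mul_div_assoc, ← half_pow_smul_mem_ball_iff, hcancel]
    · beta_reduce
      rw [hcancel, ← hvz, iterZ_neg_iterZ]
  · filter_upwards [ball_mem_nhds 0 hc] with v hv
    rw [← (hcv v hv).2 N, iterZ_neg_iterZ]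

end IsHyperbolicChart

end StableParametrizations

section StableBoxes

lemma disjoint_frontier_connectedComponentIn_of_isOpen {X : Type*} [TopologicalSpace X]
    [LocallyConnectedSpace X] {D : Set X} (hD : IsOpen D) (x : X) :
    Disjoint D (frontier (connectedComponentIn D x)) := by
  refine Set.disjoint_left.2 fun y hy hyf => ?_
  rw [hD.connectedComponentIn.frontier_eq] at hyf
  obtain ⟨z, hzy, hzx⟩ := mem_closure_iff.1 hyf.1 _ hD.connectedComponentIn
    (mem_connectedComponentIn hy)
  rw [connectedComponentIn_eq hzx, ← connectedComponentIn_eq hzy] at hyf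
  exact hyf.2 (mem_connectedComponentIn hy)

variable {E F : Type*} [NormedAddCommGroup E] [NormedAddCommGroup F] {f : M ≃ₜ M}
  {α ε ν R ρ : ℝ} {x p q : M} {l : ℕ} {e : OpenPartialHomeomorph M (E × F)}

/-- The closed box of radius `ρ` in the chart `e` lies in the ball around `x` and contains `q` in
its interior, and the `ε`-local stable set of `q` is almost horizontal inside the box. -/
structure IsStableBox {E F : Type*} [NormedAddCommGroup E] [NormedAddCommGroup F] (f : M ≃ₜ M)
    (ε : ℝ) (x : M) (ν : ℝ) (e : OpenPartialHomeomorph M (E × F)) (ρ : ℝ) (q : M) : Prop where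
  closedBall_subset : closedBall 0 ρ ⊆ e.target
  symm_mem_ball : ∀ w ∈ closedBall 0 ρ, e.symm w ∈ ball x ν
  mem_source : q ∈ e.source
  apply_mem_ball : e q ∈ ball 0 ρ
  norm_snd_lt : ∀ w ∈ closedBall 0 ρ, e.symm w ∈ WsLoc f ε q → ‖w.2‖ < ρ / 2

/-- The parameters `v` for which `ψ v` is connected to `ψ 0` inside the open box of radius `ρ` in
the chart `e`. -/
def boxComponent {E F E' : Type*} [NormedAddCommGroup E] [NormedAddCommGroup F]
    [NormedAddCommGroup E'] (e : OpenPartialHomeomorph M (E × F)) (ρ R : ℝ) (ψ : E' → M) : Set E' :=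
  connectedComponentIn (ball 0 R ∩ ψ ⁻¹' (e.source ∩ e ⁻¹' ball 0 ρ)) 0

theorem IsHyperbolicChart.eventually_isStableBox [CompactSpace M] [NormedSpace ℝ E]
    [NormedSpace ℝ F] [FiniteDimensional ℝ E] [FiniteDimensional ℝ F] (hexp : IsExpansive f α)
    (hεα : ε < α) (h : IsHyperbolicChart f p l e) (hp : p ∈ ball x ν) :
    ∀ᶠ ρ in nhdsWithin 0 (Ioi 0), ∀ᶠ q in nhds p, IsStableBox f ε x ν e ρ q := by
  have hev : ∀ᶠ w in nhds 0, w ∈ e.target ∧ e.symm w ∈ ball x ν ∧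
      (e.symm w ∈ WsLoc f ε p → (e (e.symm w)).2 = 0) :=
    (e.open_target.eventually_mem h.zero_mem_target).and (h.eventually_symm
      ((isOpen_ball.eventually_mem hp).and (h.eventually_snd_eq_zero hexp hεα)))
  obtain ⟨ρ₀, hρ₀, hsub⟩ := Metric.nhds_basis_closedBall.eventually_iff.1 hev
  filter_upwards [Ioc_mem_nhdsGT hρ₀] with ρ ⟨hρ, hρρ₀⟩
  replace hsub := fun w hw => @hsub w (closedBall_subset_closedBall hρρ₀ hw)
  have hflat : ∀ᶠ q in nhds p, ∀ w ∈ closedBall (0 : E × F) ρ ∩ {w | ρ / 2 ≤ ‖w.2‖},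
      e.symm w ∉ WsLoc f ε q := by
    refine ((isCompact_closedBall _ _).inter_right (isClosed_le continuous_const
      (by fun_prop))).eventually_forall_of_forall_eventually fun w hw => ?_
    obtain ⟨htar, -, hzero⟩ := hsub w hw.1
    have hnot : e.symm w ∉ WsLoc f ε p := fun hs => by
      have hw2 : ρ / 2 ≤ ‖w.2‖ := hw.2
      rw [← e.right_inv htar, hzero hs, norm_zero] at hw2
      exact hw2.not_gt (half_pos hρ)
    have hcont : ContinuousAt (fun z : M × (E × F) => (z.1, e.symm z.2)) (p, w) :=
      continuousAt_fst.prodMk ((e.continuousAt_symm htar).comp continuousAt_snd)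
    exact hcont.eventually ((isClosed_setOf_mem_WsLoc f ε).isOpen_compl.eventually_mem hnot)
  filter_upwards [hflat, e.open_source.eventually_mem h.mem_source,
    h.eventually_apply (isOpen_ball.eventually_mem (mem_ball_self hρ))] with q hq hqs hqb
  exact ⟨fun w hw => (hsub w hw).1, fun w hw => (hsub w hw).2.1, hqs, hqb,
    fun w hw hs => lt_of_not_ge fun hle => hq w ⟨hw, hle⟩ hs⟩

namespace IsStableParametrization

variable {E' : Type*} [NormedAddCommGroup E'] {ψ : E' → M}

lemma mem_ball_half (hψ : IsStableParametrization f ε q R ψ) {v : E'} (hv : v ∈ ball 0 R)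
    (hvq : ψ v ∈ WsLoc f ε q) : v ∈ ball 0 (R / 2) := by
  obtain ⟨w, hw, hwv⟩ := hψ.WsLoc_subset hvq
  rwa [← hψ.injOn (ball_subset_ball (half_le_self hψ.pos.le) hw) hv hwv]

lemma image_connectedComponentIn_subset (hψ : IsStableParametrization f ε q R ψ) {D : Set E'}
    (hD : D ⊆ ball 0 R) (h0 : 0 ∈ D) (hDν : MapsTo ψ D (ball x ν)) :
    ψ '' connectedComponentIn D 0 ⊆ SpSet f x ν q := by
  have hsub : connectedComponentIn D 0 ⊆ D := connectedComponentIn_subset _ _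
  refine (isPreconnected_connectedComponentIn.image ψ
    (hψ.continuousOn.mono (hsub.trans hD))).subset_connectedComponentIn
    ⟨0, mem_connectedComponentIn h0, hψ.map_zero⟩ ?_
  rintro _ ⟨v, hv, rfl⟩
  exact ⟨hψ.mem_Ws v (hD (hsub hv)), hDν (hsub hv)⟩

lemma isOpen_box_preimage (hψ : IsStableParametrization f ε q R ψ) :
    IsOpen (ball 0 R ∩ ψ ⁻¹' (e.source ∩ e ⁻¹' ball 0 ρ)) :=
  hψ.continuousOn.isOpen_inter_preimage isOpen_ball (e.isOpen_inter_preimage isOpen_ball)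

lemma zero_mem_box_preimage (hψ : IsStableParametrization f ε q R ψ)
    (hbox : IsStableBox f ε x ν e ρ q) : 0 ∈ ball 0 R ∩ ψ ⁻¹' (e.source ∩ e ⁻¹' ball 0 ρ) := by
  rw [mem_inter_iff, mem_preimage, hψ.map_zero]
  exact ⟨mem_ball_self hψ.pos, hbox.mem_source, hbox.apply_mem_ball⟩

lemma mapsTo_boxComponent (hψ : IsStableParametrization f ε q R ψ)
    (hbox : IsStableBox f ε x ν e ρ q) (hS : SpSet f x ν q ⊆ WsLoc f ε q) :
    MapsTo ψ (boxComponent e ρ R ψ) (WsLoc f ε q) := by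
  refine mapsTo_iff_image_subset.2 ((hψ.image_connectedComponentIn_subset inter_subset_left
    (hψ.zero_mem_box_preimage hbox) fun v hv => ?_).trans hS)
  rw [← e.left_inv hv.2.1]
  exact hbox.symm_mem_ball _ (ball_subset_closedBall hv.2.2)

lemma boxComponent_subset_ball_half (hψ : IsStableParametrization f ε q R ψ)
    (hbox : IsStableBox f ε x ν e ρ q) (hS : SpSet f x ν q ⊆ WsLoc f ε q) :
    boxComponent e ρ R ψ ⊆ ball 0 (R / 2) := fun _ hv =>
  hψ.mem_ball_half (connectedComponentIn_subset _ _ hv).1 (hψ.mapsTo_boxComponent hbox hS hv)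

lemma closure_boxComponent_subset_ball [NormedSpace ℝ E'] (hψ : IsStableParametrization f ε q R ψ)
    (hbox : IsStableBox f ε x ν e ρ q) (hS : SpSet f x ν q ⊆ WsLoc f ε q) :
    closure (boxComponent e ρ R ψ) ⊆ ball 0 R :=
  (closure_mono (hψ.boxComponent_subset_ball_half hbox hS)).trans
    (closure_ball_subset_closedBall.trans (closedBall_subset_ball (half_lt_self hψ.pos)))

variable [NormedSpace ℝ E'] [NormedSpace ℝ E] [NormedSpace ℝ F] [FiniteDimensional ℝ E]
  [FiniteDimensional ℝ F]

lemma mapsTo_closure_boxComponent (hψ : IsStableParametrization f ε q R ψ)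
    (hbox : IsStableBox f ε x ν e ρ q) (hS : SpSet f x ν q ⊆ WsLoc f ε q) :
    MapsTo ψ (closure (boxComponent e ρ R ψ))
      (WsLoc f ε q ∩ (e.source ∩ e ⁻¹' closedBall 0 ρ)) := by
  have hψcl : ContinuousOn ψ (closure (boxComponent e ρ R ψ)) :=
    hψ.continuousOn.mono (hψ.closure_boxComponent_subset_ball hbox hS)
  have hclosed : IsClosed (e.symm '' closedBall 0 ρ) :=
    ((isCompact_closedBall _ _).image_of_continuousOn
      (e.continuousOn_symm.mono hbox.closedBall_subset)).isClosed
  have hmaps : MapsTo ψ (boxComponent e ρ R ψ) (WsLoc f ε q ∩ e.symm '' closedBall 0 ρ) :=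
    fun v hv =>
      have hvbox := (connectedComponentIn_subset _ _ hv).2
      ⟨hψ.mapsTo_boxComponent hbox hS hv, e (ψ v), ball_subset_closedBall hvbox.2,
        e.left_inv hvbox.1⟩
  intro v hv
  obtain ⟨hvs, w, hw, hwv⟩ :=
    ((isClosed_WsLoc f ε q).inter hclosed).closure_eq ▸ hmaps.closure_of_continuousOn hψcl hv
  refine ⟨hvs, ?_⟩
  rw [mem_inter_iff, mem_preimage, ← hwv, e.right_inv (hbox.closedBall_subset hw)]
  exact ⟨e.map_target (hbox.closedBall_subset hw), hw⟩

theorem isHorizontalDisc (hψ : IsStableParametrization f ε q R ψ)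
    (hbox : IsStableBox f ε x ν e ρ q) (hS : SpSet f x ν q ⊆ WsLoc f ε q) :
    IsHorizontalDisc ρ (boxComponent e ρ R ψ) (e ∘ ψ) := by
  have hcl := hψ.mapsTo_closure_boxComponent hbox hS
  have hclR := hψ.closure_boxComponent_subset_ball hbox hS
  have hsnd : ∀ v ∈ closure (boxComponent e ρ R ψ), ‖(e (ψ v)).2‖ < ρ / 2 := fun v hv =>
    hbox.norm_snd_lt _ (hcl hv).2.2 ((e.left_inv (hcl hv).2.1).symm ▸ (hcl hv).1)
  refine ⟨isBounded_ball.subset (hψ.boxComponent_subset_ball_half hbox hS),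
    hψ.isOpen_box_preimage.connectedComponentIn.mem_nhds
      (mem_connectedComponentIn (hψ.zero_mem_box_preimage hbox)),
    e.continuousOn.comp (hψ.continuousOn.mono hclR) fun v hv => (hcl hv).2.1, hsnd,
    fun v hv => ?_⟩
  have hvc := frontier_subset_closure hv
  have hnot : e (ψ v) ∉ ball 0 ρ := fun hlt =>
    Set.disjoint_left.1
      (disjoint_frontier_connectedComponentIn_of_isOpen hψ.isOpen_box_preimage 0)
      ⟨hclR hvc, (hcl hvc).2.1, hlt⟩ hv
  have hnorm : max ‖(e (ψ v)).1‖ ‖(e (ψ v)).2‖ = ρ :=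
    le_antisymm (mem_closedBall_zero_iff.1 (hcl hvc).2.2)
      (not_lt.1 fun h => hnot (mem_ball_zero_iff.2 h))
  have hlt : ‖(e (ψ v)).2‖ < ρ := by linarith [hsnd v hvc, norm_nonneg (e (ψ v)).2]
  exact (max_eq_iff.1 hnorm).elim And.left fun h => absurd h.1 hlt.ne

end IsStableParametrization

end StableBoxes

section IndexComparison

variable {E F E' F' : Type*} [NormedAddCommGroup E] [NormedSpace ℝ E] [FiniteDimensional ℝ E]
  [NormedAddCommGroup F] [NormedSpace ℝ F] [FiniteDimensional ℝ F] [NormedAddCommGroup E']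
  [NormedSpace ℝ E'] [FiniteDimensional ℝ E'] [NormedAddCommGroup F'] [NormedSpace ℝ F']
  [FiniteDimensional ℝ F'] {f : M ≃ₜ M} {α ε ν ρ : ℝ} {x p q : M} {l n r : ℕ}
  {e : OpenPartialHomeomorph M (E × F)} {e' : OpenPartialHomeomorph M (E' × F')}

theorem IsHyperbolicChart.finrank_le_of_isStableBox [CompactSpace M] (hexp : IsExpansive f α)
    (hεα : ε < α) (he' : IsHyperbolicChart f q l e') (hs : IsStableBox f ε x ν e ρ q)
    (hu : IsStableBox f.symm ε x ν (e.transHomeomorph (Homeomorph.prodComm E F)) ρ q)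
    (hS : SpSet f x ν q ⊆ WsLoc f ε q) (hU : UpSet f x ν q ⊆ WuLoc f ε q) :
    Module.finrank ℝ E ≤ Module.finrank ℝ E' := by
  rw [← SpSet_symm, ← WsLoc_symm] at hU
  obtain ⟨R, ψ, hψ, hψe⟩ := he'.exists_isStableParametrization hexp hεα
  obtain ⟨R', φ, hφ, hφe⟩ := he'.swap.exists_isStableParametrization hexp.symm hεα
  have hψcl := hψ.mapsTo_closure_boxComponent hs hS
  have hφcl := hφ.mapsTo_closure_boxComponent hu hU
  refine finrank_le_of_isHorizontalDisc (e'.symm.trans e) ?_ (ψ := e ∘ ψ) (φ := e ∘ φ)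
    (hψ.isHorizontalDisc hs hS) (hφ.isHorizontalDisc hu hU) ?_ ?_ fun v hv u hu' huv => ?_
  · rw [OpenPartialHomeomorph.trans_source, mem_inter_iff, mem_preimage, he'.symm_zero]
    exact ⟨he'.zero_mem_target, hs.mem_source⟩
  · filter_upwards [hψe] with v hv
    exact congrArg e hv
  · filter_upwards [hφe] with u hu
    exact congrArg e hu
  · have hmeet : φ u = ψ v := e.injOn (hφcl hu').2.1 (hψcl hv).2.1 huv
    have hq : q = ψ v := hexp.eq_of_mem_WsLoc_of_mem_WuLoc hεα (hψcl hv).1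
      (hmeet ▸ WsLoc_symm f ε q ▸ (hφcl hu').1)
    exact ⟨hψ.injOn (hψ.closure_boxComponent_subset_ball hs hS hv) (mem_ball_self hψ.pos)
        (hq.symm.trans hψ.map_zero.symm),
      hφ.injOn (hφ.closure_boxComponent_subset_ball hu hU hu') (mem_ball_self hφ.pos)
        ((hmeet.trans hq.symm).trans hφ.map_zero.symm)⟩

lemma mem_PerH_iff : p ∈ PerH f n ↔ ∃ r ≤ n, p ∈ PerHr f n r := by
  simp only [PerH, mem_iUnion, Finset.mem_range, Nat.lt_succ_iff, exists_prop]

theorem eventually_mem_PerHr [CompactSpace M] (hexp : IsExpansive f α) (hεα : ε < α)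
    (hi : ∀ p ∈ PerH f n ∩ ball x ν,
      SpSet f x ν p ⊆ WsLoc f ε p ∧ UpSet f x ν p ⊆ WuLoc f ε p)
    (hr : r ≤ n) (hp : p ∈ PerHr f n r) (hpν : p ∈ ball x ν) :
    ∀ᶠ q in nhds p, q ∈ PerH f n → q ∈ PerHr f n r := by
  obtain ⟨l, e, he⟩ := mem_PerHr_iff.1 hp
  obtain ⟨ρ, hs, hu⟩ := ((he.eventually_isStableBox hexp hεα hpν).and
    (he.swap.eventually_isStableBox hexp.symm hεα hpν)).exists
  filter_upwards [hs, hu, isOpen_ball.eventually_mem hpν] with q hqs hqu hqν hqH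
  obtain ⟨hS, hU⟩ := hi q ⟨hqH, hqν⟩
  obtain ⟨s, hsn, hq⟩ := mem_PerH_iff.1 hqH
  obtain ⟨l', e', he'⟩ := mem_PerHr_iff.1 hq
  have hrs := he'.finrank_le_of_isStableBox hexp hεα hqs hqu hS hU
  have hrs' := he'.swap.finrank_le_of_isStableBox hexp.symm hεα hqu hqs
    (by rwa [SpSet_symm, WsLoc_symm]) (by rwa [← SpSet_symm, ← WsLoc_symm])
  rw [Module.finrank_fin_fun, Module.finrank_fin_fun] at hrs hrs'
  obtain rfl : s = r := by lia
  exact hq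

theorem exists_isOpen_Ws_subset_PerH_inter_subset [CompactSpace M] (hexp : IsExpansive f α)
    (hεα : ε < α)
    (hi : ∀ p ∈ PerH f n ∩ ball x ν,
      SpSet f x ν p ⊆ WsLoc f ε p ∧ UpSet f x ν p ⊆ WuLoc f ε p)
    (hr : r ≤ n) (hp : p ∈ PerHr f n r) (hpν : p ∈ ball x ν) :
    ∃ V : Set M, IsOpen V ∧ Ws f p ⊆ V ∧ PerH f n ∩ V ⊆ PerHr f n r := by
  obtain ⟨l, e, he⟩ := mem_PerHr_iff.1 hp
  obtain ⟨N, hN, hNo, hpN⟩ :=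
    _root_.eventually_nhds_iff.1 (eventually_mem_PerHr hexp hεα hi hr hp hpν)
  refine ⟨⋃ k : ℕ, iterZ f (l * k) ⁻¹' N,
    isOpen_iUnion fun k => hNo.preimage (continuous_iterZ f _), fun y hy => ?_, ?_⟩
  · exact mem_iUnion.2
      (((mem_Ws_iff_tendsto he.one_le he.iterZ_eq).1 hy).eventually_mem (hNo.mem_nhds hpN)).exists
  · rintro q ⟨hq, hqV⟩
    obtain ⟨k, hk⟩ := mem_iUnion.1 hqV
    obtain ⟨s, hs, hqs⟩ := mem_PerH_iff.1 hq
    have hr := hN _ hk (mem_PerH_iff.2 ⟨s, hs, iterZ_mem_PerHr hqs _⟩)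
    simpa using iterZ_mem_PerHr hr (-(l * k))

end IndexComparison

section SeparatingSets

variable {f : M ≃ₜ M} {α ε ν : ℝ} {n : ℕ} {x p q : M}

lemma SpSet_subset_Ws : SpSet f x ν p ⊆ Ws f p :=
  (connectedComponentIn_subset _ _).trans inter_subset_left

lemma SpSet_subset_ball : SpSet f x ν p ⊆ ball x ν :=
  (connectedComponentIn_subset _ _).trans inter_subset_right

lemma mem_SpSet_self (hp : p ∈ ball x ν) : p ∈ SpSet f x ν p :=
  mem_connectedComponentIn ⟨mem_Ws_self f p, hp⟩

lemma SpSet_subset_ShatSet : SpSet f x ν p ⊆ ShatSet f x ν p := fun _ hy =>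
  ⟨SpSet_subset_ball hy, fun hy' => (connectedComponentIn_subset _ _ hy').2 hy⟩

lemma ShatSet_eq_ball_of_mem (hx : x ∈ SpSet f x ν p) : ShatSet f x ν p = ball x ν := by
  rw [ShatSet, connectedComponentIn_eq_empty fun h => h.2 hx, sdiff_empty]

theorem isOpen_ball_sdiff_SpSet [CompactSpace M] (hexp : IsExpansive f α) (hεα : ε < α)
    (h : SpSet f x ν p ⊆ WsLoc f ε p) (hp : p ∈ ball x ν) : IsOpen (ball x ν \ SpSet f x ν p) := by
  have hclosed : closure (SpSet f x ν p) ∩ ball x ν ⊆ SpSet f x ν p := by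
    refine (isPreconnected_connectedComponentIn.subset_closure
      (subset_inter subset_closure SpSet_subset_ball)
      inter_subset_left).subset_connectedComponentIn
        ⟨subset_closure (mem_SpSet_self hp), hp⟩ (inter_subset_inter_left _ ?_)
    exact (closure_minimal h (isClosed_WsLoc f ε p)).trans (hexp.WsLoc_subset_Ws hεα p)
  have heq : ball x ν \ SpSet f x ν p = ball x ν \ closure (SpSet f x ν p) :=
    (sdiff_subset_sdiff_right subset_closure).antisymm' fun y hy =>
      ⟨hy.1, fun hy' => hy.2 (hclosed ⟨hy', hy.1⟩)⟩
  rw [heq]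
  exact isOpen_ball.sdiff isClosed_closure

theorem disjoint_SpSet_of_mem_PerHr {r s : ℕ} (hp : p ∈ PerHr f n r) (hq : q ∈ PerHr f n s)
    (hpq : p ≠ q) : Disjoint (SpSet f x ν p) (SpSet f x ν q) := by
  obtain ⟨l, e, he⟩ := mem_PerHr_iff.1 hp
  obtain ⟨m, e', he'⟩ := mem_PerHr_iff.1 hq
  exact Set.disjoint_left.2 fun z hzp hzq => hpq (eq_of_mem_Ws_of_mem_Ws he.one_le he'.one_le
    he.iterZ_eq he'.iterZ_eq (SpSet_subset_Ws hzp) (SpSet_subset_Ws hzq))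

lemma ShatSet_subset_of_notMem (hx : x ∈ ball x ν \ SpSet f x ν p)
    (hdisj : Disjoint (SpSet f x ν q) (SpSet f x ν p)) (hqν : q ∈ ball x ν)
    (hq : q ∉ connectedComponentIn (ball x ν \ SpSet f x ν p) x) :
    ShatSet f x ν q ⊆ ShatSet f x ν p := by
  refine sdiff_subset_sdiff_right (isPreconnected_connectedComponentIn.subset_connectedComponentIn
    (mem_connectedComponentIn hx) fun z hz =>
      ⟨(connectedComponentIn_subset _ _ hz).1, fun hzq => hq ?_⟩)
  rw [connectedComponentIn_eq hz]
  exact isPreconnected_connectedComponentIn.subset_connectedComponentIn hzq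
    (subset_sdiff.2 ⟨SpSet_subset_ball, hdisj⟩) (mem_SpSet_self hqν)

end SeparatingSets

section MaximalChains

variable {f : M ≃ₜ M} {α ε ν δ : ℝ} {n : ℕ} {x p c q : M} {C : Set M}

lemma exists_isMaxChainIn {C₀ : Set M} (h : IsChainIn f n x ν δ C₀) :
    ∃ C, IsMaxChainIn f n x ν δ C ∧ C₀ ⊆ C := by
  have hunion : ∀ S ⊆ {C | IsChainIn f n x ν δ C}, IsChain (· ⊆ ·) S →
      IsChainIn f n x ν δ (⋃₀ S) := by
    refine fun S hS hchain => ⟨sUnion_subset fun s hs => (hS hs).1, ?_⟩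
    rintro a ⟨s, hs, has⟩ b ⟨t, ht, hbt⟩
    rcases hchain.total hs ht with hst | hts
    · exact (hS ht).2 a (hst has) b hbt
    · exact (hS hs).2 a has b (hts hbt)
  obtain ⟨C, hC₀, hC⟩ := zorn_subset_nonempty {C | IsChainIn f n x ν δ C}
    (fun S hS hchain _ => ⟨⋃₀ S, hunion S hS hchain, fun s hs => subset_sUnion_of_mem hs⟩) C₀ h
  exact ⟨C, ⟨hC.1, fun C' hC' hsub => (hC.2 hC' hsub).antisymm hsub⟩, hC₀⟩

lemma exists_isMaxChainIn_mem (hp : p ∈ Xdelta f n x δ) :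
    ∃ C, IsMaxChainIn f n x ν δ C ∧ p ∈ C := by
  have hsingle : IsChainIn f n x ν δ {p} := by
    refine ⟨singleton_subset_iff.2 hp, ?_⟩
    rintro a rfl b rfl
    exact Or.inl Subset.rfl
  obtain ⟨C, hC, hsub⟩ := exists_isMaxChainIn hsingle
  exact ⟨C, hC, singleton_subset_iff.1 hsub⟩

lemma IsMaxChainIn.mem_of_ShatSet_subset
    (hdisj : ∀ C₁ C₂ : Set M, IsMaxChainIn f n x ν δ C₁ → IsMaxChainIn f n x ν δ C₂ →
      C₁ ≠ C₂ → Disjoint C₁ C₂)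
    (hC : IsMaxChainIn f n x ν δ C) (hc : c ∈ C) (hq : q ∈ Xdelta f n x δ)
    (h : ShatSet f x ν q ⊆ ShatSet f x ν c) : q ∈ C := by
  have hpair : IsChainIn f n x ν δ {c, q} := by
    refine ⟨pair_subset (hC.1.1 hc) hq, ?_⟩
    rintro a (rfl | rfl) b (rfl | rfl)
    exacts [Or.inl Subset.rfl, Or.inr h, Or.inl h, Or.inl Subset.rfl]
  obtain ⟨C', hC', hsub⟩ := exists_isMaxChainIn hpair
  obtain rfl : C = C' := not_imp_comm.1 (hdisj C C' hC hC')
    (not_disjoint_iff.2 ⟨c, hc, hsub (mem_insert _ _)⟩)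
  exact hsub (mem_insert_of_mem _ rfl)

/-- Since `C` accumulates at `x`, it has an element in the component of `x` in the complement of
`S_p`; such an element is not below `p`. -/
lemma IsMaxChainIn.exists_ShatSet_subset [LocallyConnectedSpace M]
    (hC : IsMaxChainIn f n x ν δ C) (hacc : x ∈ closure C) (hδν : δ ≤ ν) (hp : p ∈ C)
    (hopen : IsOpen (ball x ν \ SpSet f x ν p)) (hx : x ∈ ball x ν \ SpSet f x ν p) :
    ∃ c ∈ C, p ≠ c ∧ ShatSet f x ν p ⊆ ShatSet f x ν c := by
  obtain ⟨c, hcx, hcC⟩ := mem_closure_iff.1 hacc _ hopen.connectedComponentIn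
    (mem_connectedComponentIn hx)
  have hmem : ∀ q ∈ C, q ∈ SpSet f x ν q := fun q hq =>
    mem_SpSet_self (ball_subset_ball hδν (hC.1.1 hq).2)
  refine ⟨c, hcC, ?_, (hC.1.2 p hp c hcC).resolve_right fun hle =>
    (hle (SpSet_subset_ShatSet (hmem c hcC))).2 hcx⟩
  rintro rfl
  exact (connectedComponentIn_subset _ _ hcx).2 (hmem p hp)

theorem IsMaxChainIn.exists_isOpen_SpSet_subset_Xdelta_inter_subset [CompactSpace M]
    [LocallyConnectedSpace M] (hexp : IsExpansive f α) (hεα : ε < α) (hδν : δ ≤ ν)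
    (hi : ∀ p ∈ Xdelta f n x δ, SpSet f x ν p ⊆ WsLoc f ε p)
    (hdisj : ∀ C₁ C₂ : Set M, IsMaxChainIn f n x ν δ C₁ → IsMaxChainIn f n x ν δ C₂ →
      C₁ ≠ C₂ → Disjoint C₁ C₂)
    (hC : IsMaxChainIn f n x ν δ C) (hacc : x ∈ closure C) (hp : p ∈ C) :
    ∃ V : Set M, IsOpen V ∧ SpSet f x ν p ⊆ V ∧ Xdelta f n x δ ∩ V ⊆ C := by
  have hball : ∀ q ∈ Xdelta f n x δ, q ∈ ball x ν := fun q hq => ball_subset_ball hδν hq.2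
  by_cases hcase : ∃ c ∈ C, x ∈ SpSet f x ν c
  · obtain ⟨c, hcC, hxc⟩ := hcase
    refine ⟨univ, isOpen_univ, subset_univ _, fun q hq =>
      hC.mem_of_ShatSet_subset hdisj hcC hq.1 ?_⟩
    exact ShatSet_eq_ball_of_mem hxc ▸ sdiff_subset
  have hx : ∀ c ∈ C, x ∈ ball x ν \ SpSet f x ν c := fun c hc =>
    ⟨mem_ball_self (pos_of_mem_ball (hball p (hC.1.1 hp))), fun hxc => hcase ⟨c, hc, hxc⟩⟩
  have hopen : ∀ c ∈ C, IsOpen (ball x ν \ SpSet f x ν c) := fun c hc =>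
    isOpen_ball_sdiff_SpSet hexp hεα (hi c (hC.1.1 hc)) (hball c (hC.1.1 hc))
  obtain ⟨c, hcC, hpc, hle⟩ := hC.exists_ShatSet_subset hacc hδν hp (hopen p hp) (hx p hp)
  have hcX := hC.1.1 hcC
  refine ⟨(ball x ν \ SpSet f x ν c) \ closure (connectedComponentIn (ball x ν \ SpSet f x ν c) x),
    (hopen c hcC).sdiff isClosed_closure, fun y hy => ?_, fun q hq => ?_⟩
  · have hy' : y ∈ ball x ν \ SpSet f x ν c := ⟨SpSet_subset_ball hy,
      Set.disjoint_left.1 (disjoint_SpSet_of_mem_PerHr (hC.1.1 hp).1 hcX.1 hpc) hy⟩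
    refine ⟨hy', fun hyc => Set.disjoint_left.1
      (disjoint_frontier_connectedComponentIn_of_isOpen (hopen c hcC) x) hy' ?_⟩
    rw [(hopen c hcC).connectedComponentIn.frontier_eq]
    exact ⟨hyc, (hle (SpSet_subset_ShatSet hy)).2⟩
  · obtain ⟨hqX, hqc, hqx⟩ := hq
    have hne : q ≠ c := fun h => hqc.2 (h ▸ mem_SpSet_self hqc.1)
    exact hC.mem_of_ShatSet_subset hdisj hcC hqX (ShatSet_subset_of_notMem (hx c hcC)
      (disjoint_SpSet_of_mem_PerHr hqX.1 hcX.1 hne) hqc.1 fun h => hqx (subset_closure h))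

end MaximalChains

theorem stmt13_general [CompactSpace M] [LocallyConnectedSpace M] {n : ℕ} {f : M ≃ₜ M}
    {α ε ν δ : ℝ} {x : M} (hexp : IsExpansive f α) (hεα : ε < α)
    (hi : ∀ p ∈ PerH f n ∩ ball x ν,
      SpSet f x ν p ⊆ WsLoc f ε p ∧ UpSet f x ν p ⊆ WuLoc f ε p)
    (hδν : δ ≤ ν)
    (hdisj : ∀ C₁ C₂ : Set M, IsMaxChainIn f n x ν δ C₁ → IsMaxChainIn f n x ν δ C₂ →
      C₁ ≠ C₂ → Disjoint C₁ C₂)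
    (hacc : ∀ C : Set M, IsMaxChainIn f n x ν δ C → x ∈ closure C) :
    ∀ p ∈ PerHr f n (n - 1) ∩ ball x δ,
      ∃ V : Set M, IsOpen V ∧ SpSet f x ν p ⊆ V ∧
        ∀ C : Set M, IsMaxChainIn f n x ν δ C → p ∈ C → PerH f n ∩ V ∩ ball x δ ⊆ C := by
  intro p hp
  have hX : ∀ q ∈ Xdelta f n x δ, q ∈ PerH f n ∩ ball x ν := fun q hq =>
    ⟨mem_PerH_iff.2 ⟨n - 1, Nat.sub_le n 1, hq.1⟩, ball_subset_ball hδν hq.2⟩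
  obtain ⟨C, hC, hpC⟩ := exists_isMaxChainIn_mem (ν := ν) hp
  obtain ⟨V, hVo, hpV, hV⟩ := exists_isOpen_Ws_subset_PerH_inter_subset hexp hεα hi
    (Nat.sub_le n 1) hp.1 (hX p hp).2
  obtain ⟨V', hVo', hpV', hV'⟩ := hC.exists_isOpen_SpSet_subset_Xdelta_inter_subset hexp hεα hδν
    (fun q hq => (hi q (hX q hq)).1) hdisj (hacc C hC) hpC
  refine ⟨V ∩ V', hVo.inter hVo', subset_inter (SpSet_subset_Ws.trans hpV) hpV',
    fun C' hC' hpC' q hq => ?_⟩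
  obtain rfl : C = C' := not_imp_comm.1 (hdisj C C' hC hC') (not_disjoint_iff.2 ⟨p, hpC, hpC'⟩)
  exact hV' ⟨⟨hV ⟨hq.1.1, hq.1.2.1⟩, hq.2⟩, hq.1.2.2⟩

/-- **Lemma.** Each `S_p`, `p ∈ Per_H^{n-1} ∩ B_δ(x)`, has a neighborhood `V` with
`Per_H ∩ V ∩ B_δ(x) ⊆ [p]`, the maximal chain of `p`. -/
theorem stmt13
    {M : Type*} [MetricSpace M] [CompactSpace M] [ConnectedSpace M]
    (n : ℕ) [ChartedSpace (EuclideanSpace ℝ (Fin n)) M]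
    (f : M ≃ₜ M) (α : ℝ) (hα : 0 < α) (hexp : IsExpansive f α)
    (x : M) (hx : ¬ AdmitsLPS f n x)
    (ε : ℝ) (hε : 0 < ε) (hεα : 2 * ε < α) (ν : ℝ) (hν : 0 < ν)
    (hi : ∀ p ∈ PerH f n ∩ Metric.ball x ν,
      SpSet f x ν p ⊆ WsLoc f ε p ∧ UpSet f x ν p ⊆ WuLoc f ε p)
    (hii : ∀ p ∈ PerHr f n (n - 1) ∩ Metric.ball x ν,
      ∃ V₁ V₂ : Set M, TwoComponents (Metric.ball x ν \ SpSet f x ν p) V₁ V₂)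
    (hdense : closure (PerH f n) = Set.univ)
    (δ : ℝ) (hδ : δ ∈ Set.Ioo (0 : ℝ) ν)
    (hfin : {C : Set M | IsMaxChainIn f n x ν δ C}.Finite)
    (hdisj : ∀ C₁ C₂ : Set M, IsMaxChainIn f n x ν δ C₁ → IsMaxChainIn f n x ν δ C₂ →
      C₁ ≠ C₂ → Disjoint C₁ C₂)
    (hacc : ∀ C : Set M, IsMaxChainIn f n x ν δ C → x ∈ closure C)
    :
    ∀ p ∈ PerHr f n (n - 1) ∩ Metric.ball x δ,
      ∃ V : Set M, IsOpen V ∧ SpSet f x ν p ⊆ V ∧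
        ∀ C : Set M, IsMaxChainIn f n x ν δ C → p ∈ C →
          PerH f n ∩ V ∩ Metric.ball x δ ⊆ C := by
  have := ChartedSpace.locallyConnectedSpace (EuclideanSpace ℝ (Fin n)) M
  exact stmt13_general hexp (by linarith) hi hδ.2.le hdisj hacc
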